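/- Let n be a positive integer divisible by 4. Then the complex dimension of the diagonal coinvariant ring R_W of the Weyl group W(B_n) satisfies dim_ℂ R_W ≥ (2n+1)^n + n(n-4)/4. -/

import Mathlib

open MvPolynomial

/-- The action of the signed permutation `(ε, σ) ∈ W(Bₙ)` on the polynomial ring
`ℂ[x₁,…,xₙ,y₁,…,yₙ]`, sending `xᵢ ↦ εᵢ x_{σ(i)}` and `yᵢ ↦ εᵢ y_{σ(i)}`. -/
noncomputable def bAct (n : ℕ) (ε : Fin n → ℤˣ) (σ : Equiv.Perm (Fin n)) :
    MvPolynomial (Fin n ⊕ Fin n) ℂ →ₐ[ℂ] MvPolynomial (Fin n ⊕ Fin n) ℂ :=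
  aeval (Sum.elim
    (fun i => (((ε i : ℤ) : ℂ)) • X (Sum.inl (σ i)))
    (fun i => (((ε i : ℤ) : ℂ)) • X (Sum.inr (σ i))))

/-- The ideal `I_W` generated by the `W(Bₙ)`-invariant polynomials of positive degree
(equivalently, by the invariant polynomials with zero constant term). -/
noncomputable def diagIdeal (n : ℕ) : Ideal (MvPolynomial (Fin n ⊕ Fin n) ℂ) :=
  Ideal.span {f | (∀ ε σ, bAct n ε σ f = f) ∧ constantCoeff f = 0}

/-!
Let `x` be multiplication by `z` and `y` the Dunkl operator of `ℤ/2` on `ℂ[z]/(z^{2n+1})`. Acting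
in the slots of the tensor power, they generate everything from the alternating tensor
`z ∧ z³ ∧ ⋯ ∧ z^{2n-1}`. An invariant polynomial only rescales this tensor, because the alternating
tensors with odd entries form a line; hence the associated graded module of the degree filtration,
of dimension `(2n+1)^n`, is a quotient of `R_W`. The part of the tensors where `W` acts through
`(ε, σ) ↦ ∏ᵢ εᵢ` consists of alternating tensors with even entries and so has dimension at most
`n + 1`. Therefore `(2n+1)^n - (n+1)` already bounds from below the complement of that isotypic
part in `R_W`.

A functional on this isotypic part of `R_W` can be produced by polarizing a polynomial in variables
`Z_{(a,b)}`, `a + b` odd, which is killed by all derivations lowering the index by a vector of even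
total degree, these being dual to multiplication by polarized power sums. Regarding the `Z_{(a,b)}`
as the coefficients of generic binary forms and evaluating at the root of the linear form produces
such polynomials in degrees `1, 1, 4, 7, 7`. Their products of degree `n` contain
`n + 1 + n(n-4)/4` linearly independent ones.
-/

section Antisymmetric

variable {K ι κ : Type*} [Field K] [Fintype ι] [DecidableEq ι]

/-- The functions `F : (ι → κ) → K`, viewed as the coordinates of a tensor in the `ι`-th tensor
power of `κ → K`, that are antisymmetric under permutation of the slots and supported on the
multi-indices with all entries in `S`: a model for `⋀^ι` of the coordinate subspace of `S`. -/
def antisymmetricOn (K ι : Type*) {κ : Type*} [CommRing K] [Fintype ι] [DecidableEq ι] (S : Set κ) :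
    Submodule K ((ι → κ) → K) where
  carrier := {F | (∀ k i, k i ∉ S → F k = 0) ∧
    ∀ (σ : Equiv.Perm ι) k, F (k ∘ σ) = Equiv.Perm.sign σ • F k}
  zero_mem' := by simp
  add_mem' := by
    rintro F G ⟨hF, hFσ⟩ ⟨hG, hGσ⟩
    exact ⟨fun k i h => by simp [hF k i h, hG k i h], fun σ k => by simp [hFσ, hGσ]⟩
  smul_mem' := by
    rintro c F ⟨hF, hFσ⟩
    exact ⟨fun k i h => by simp [hF k i h], fun σ k => by simp [hFσ, mul_smul_comm]⟩

lemma antisymmetricOn_apply_eq_zero_of_not_injective [CharZero K] {S : Set κ}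
    {F : (ι → κ) → K} (hF : F ∈ antisymmetricOn K ι S) {k : ι → κ}
    (hk : ¬ Function.Injective k) : F k = 0 := by
  obtain ⟨i, j, hkij, hij⟩ := Function.not_injective_iff.mp hk
  have hswap := hF.2 (Equiv.swap i j) k
  have hcomp : k ∘ Equiv.swap i j = k := by
    rw [Equiv.comp_swap_eq_update, hkij, Function.update_eq_self, ← hkij, Function.update_eq_self]
  rw [hcomp, Equiv.Perm.sign_swap hij, Units.neg_smul, one_smul] at hswap
  exact self_eq_neg.mp hswap

lemma finrank_antisymmetricOn_le [CharZero K] [LinearOrder κ] (n : ℕ) (S : Finset κ) :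
    Module.finrank K (antisymmetricOn K (Fin n) (S : Set κ)) ≤ S.card.choose n := by
  let restrict : antisymmetricOn K (Fin n) (S : Set κ) →ₗ[K] (S.powersetCard n → K) :=
    LinearMap.pi fun t =>
      (LinearMap.proj (t.1.orderEmbOfFin (Finset.mem_powersetCard.mp t.2).2 : Fin n → κ)).comp
        (Submodule.subtype _)
  have hinj : Function.Injective restrict := by
    refine (injective_iff_map_eq_zero _).mpr fun F hF => Subtype.ext (funext fun k => ?_)
    by_cases hS : ∀ i, k i ∈ S
    · by_cases hk : Function.Injective k
      · have hcard : (Finset.univ.image k).card = n := by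
          rw [Finset.card_image_of_injective _ hk, Finset.card_fin]
        have hmem : Finset.univ.image k ∈ S.powersetCard n :=
          Finset.mem_powersetCard.mpr ⟨Finset.image_subset_iff.mpr fun i _ => hS i, hcard⟩
        have hmono : StrictMono (k ∘ Tuple.sort k) :=
          (Tuple.monotone_sort k).strictMono_of_injective (hk.comp (Tuple.sort k).injective)
        have hsort : k ∘ Tuple.sort k = (Finset.univ.image k).orderEmbOfFin hcard :=
          Finset.orderEmbOfFin_unique hcard (by simp) hmono
        have hzero : F.1 (k ∘ Tuple.sort k) = 0 := hsort ▸ congrFun hF ⟨_, hmem⟩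
        rwa [F.2.2, smul_eq_zero_iff_eq] at hzero
      · exact antisymmetricOn_apply_eq_zero_of_not_injective F.2 hk
    · obtain ⟨i, hi⟩ := not_forall.mp hS
      exact F.2.1 k i hi
  simpa using LinearMap.finrank_le_finrank_of_injective hinj

end Antisymmetric

section Slater

variable {K ι κ : Type*} [CommRing K] [Fintype ι] [DecidableEq ι]

/-- The Slater determinant `k ↦ det (u i j (k i))` of a square array of vectors `u i j : κ → K`,
that is, the tensor `∑_σ sign σ • ⨂ᵢ u i (σ i)` in coordinates. -/
def slater (u : ι → ι → κ → K) : (ι → κ) → K :=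
  fun k => (Matrix.of fun i j => u i j (k i)).det

/-- The action of the endomorphism `A` on the `i`-th factor of the tensor power. -/
def slotMap (i : ι) (A : Module.End K (κ → K)) : Module.End K ((ι → κ) → K) where
  toFun F k := A (fun l => F (Function.update k i l)) (k i)
  map_add' F G := by
    ext k
    exact congrFun (A.map_add (fun l => F (Function.update k i l)) _) (k i)
  map_smul' c F := by
    ext k
    exact congrFun (A.map_smul c (fun l => F (Function.update k i l))) (k i)

lemma slater_update_apply (u : ι → ι → κ → K) (i : ι) (v : ι → κ → K) (k : ι → κ) :
    slater (Function.update u i v) k =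
      ((Matrix.of fun i j => u i j (k i)).updateRow i fun j => v j (k i)).det := by
  unfold slater
  congr 1
  ext a b
  by_cases h : a = i
  · subst h
    simp
  · simp [h]

lemma slater_update_add (u : ι → ι → κ → K) (i : ι) (v w : ι → κ → K) :
    slater (Function.update u i (v + w)) =
      slater (Function.update u i v) + slater (Function.update u i w) := by
  ext k
  simp only [Pi.add_apply, slater_update_apply]
  exact Matrix.det_updateRow_add ..

lemma slater_update_smul (u : ι → ι → κ → K) (i : ι) (c : K) (v : ι → κ → K) :
    slater (Function.update u i (c • v)) = c • slater (Function.update u i v) := by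
  ext k
  simp only [Pi.smul_apply, slater_update_apply]
  exact Matrix.det_updateRow_smul ..

lemma slotMap_slater (u : ι → ι → κ → K) (i : ι) (A : Module.End K (κ → K)) :
    slotMap i A (slater u) = slater (Function.update u i fun j => A (u i j)) := by
  ext k
  let M : Matrix ι ι K := Matrix.of fun i j => u i j (k i)
  have hrow (v : ι → κ → K) (l : κ) :
      (M.updateRow i fun j => v j l).det = ∑ j, v j l * M.adjugate j i := by
    rw [← Matrix.cramer_transpose_apply, Matrix.cramer_eq_adjugate_mulVec]
    simp [Matrix.mulVec, dotProduct, ← Matrix.adjugate_transpose, mul_comm]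
  have hexpand (l : κ) :
      slater u (Function.update k i l) = ∑ j, M.adjugate j i * u i j l := by
    simp_rw [mul_comm (M.adjugate _ _), ← hrow]
    unfold slater
    congr 1
    ext a b
    by_cases h : a = i
    · subst h
      simp
    · simp [M, h]
  calc slotMap i A (slater u) k
      = A (∑ j, M.adjugate j i • u i j) (k i) := by
        refine congrArg (fun f => A f (k i)) (funext fun l => ?_)
        simp [hexpand, smul_eq_mul]
    _ = ∑ j, A (u i j) (k i) * M.adjugate j i := by simp [mul_comm]
    _ = slater (Function.update u i fun j => A (u i j)) k := by
        rw [slater_update_apply, ← hrow]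

lemma slater_comp_comp_perm (u : ι → ι → κ → K) (σ : Equiv.Perm ι) (k : ι → κ) :
    slater (u ∘ σ) (k ∘ σ) = Equiv.Perm.sign σ • slater u k := by
  have := Matrix.det_permute σ (Matrix.of fun i j => u i j (k i))
  rw [Units.smul_def, zsmul_eq_mul, slater, slater, ← this]
  rfl

end Slater

section RankOne

variable (K : Type*) [CommRing K] (n : ℕ)

/-- The `l`-th standard basis vector of `K ^ (2 * n + 1)`, with junk value `0` for `l > 2 * n`. -/
def stdVec (l : ℕ) : Fin (2 * n + 1) → K := fun k => if (k : ℕ) = l then 1 else 0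

/-- The weights of the lowering operator: the Dunkl operator of `ℤ/2` with parameter
`(2 * n + 1) / 2` sends `x ^ l` to `dunklWeight K n l * x ^ (l - 1)`. -/
def dunklWeight (l : ℕ) : K := if Even l then (l : K) else l - (2 * n + 1)

/-- Multiplication by `x` on `K[x] / (x ^ (2 * n + 1))`. -/
noncomputable def raise : Module.End K (Fin (2 * n + 1) → K) :=
  (Pi.basisFun K _).constr K fun l => stdVec K n (l + 1)

/-- The Dunkl operator on `K[x] / (x ^ (2 * n + 1))`. -/
noncomputable def lower : Module.End K (Fin (2 * n + 1) → K) :=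
  (Pi.basisFun K _).constr K fun l => dunklWeight K n l • stdVec K n (l - 1)

/-- The substitution `x ↦ -x` on `K[x] / (x ^ (2 * n + 1))`. -/
noncomputable def parity : Module.End K (Fin (2 * n + 1) → K) :=
  (Pi.basisFun K _).constr K fun l => (-1 : K) ^ (l : ℕ) • stdVec K n l

variable {K n}

lemma basisFun_eq_stdVec (l : Fin (2 * n + 1)) : Pi.basisFun K _ l = stdVec K n l := by
  ext k
  simp [stdVec, Pi.single_apply, Fin.ext_iff]

lemma stdVec_eq_zero {l : ℕ} (hl : 2 * n < l) : stdVec K n l = 0 := by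
  ext k
  exact if_neg (by omega)

lemma dunklWeight_zero : dunklWeight K n 0 = 0 := by simp [dunklWeight]

lemma dunklWeight_top : dunklWeight K n (2 * n + 1) = 0 := by simp [dunklWeight]

lemma dunklWeight_succ (l : ℕ) :
    dunklWeight K n (l + 1) = dunklWeight K n l + 1 - (2 * n + 1) * (-1) ^ l := by
  rcases Nat.even_or_odd l with hl | hl
  · simp [dunklWeight, hl, hl.add_one, hl.neg_one_pow]
  · simp [dunklWeight, Nat.not_even_iff_odd.mpr hl, hl.add_one, hl.neg_one_pow]
    ring

lemma dunklWeight_ne_zero [CharZero K] {l : ℕ} (hl : 0 < l) (hln : l ≤ 2 * n) :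
    dunklWeight K n l ≠ 0 := by
  unfold dunklWeight
  split_ifs
  · exact_mod_cast hl.ne'
  · rw [sub_ne_zero]
    exact_mod_cast show l ≠ 2 * n + 1 by omega

lemma constr_stdVec {v : ℕ → Fin (2 * n + 1) → K} (hv : ∀ l, 2 * n < l → v l = 0) (l : ℕ) :
    (Pi.basisFun K _).constr K (fun k : Fin (2 * n + 1) => v k) (stdVec K n l) = v l := by
  rcases lt_or_ge (2 * n) l with hl | hl
  · rw [stdVec_eq_zero hl, map_zero, hv l hl]
  · rw [← basisFun_eq_stdVec ⟨l, by omega⟩, Module.Basis.constr_basis]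

lemma raise_stdVec (l : ℕ) : raise K n (stdVec K n l) = stdVec K n (l + 1) :=
  constr_stdVec (fun _ hl => stdVec_eq_zero (by omega)) l

lemma lower_stdVec (l : ℕ) :
    lower K n (stdVec K n l) = dunklWeight K n l • stdVec K n (l - 1) := by
  refine constr_stdVec (v := fun l => dunklWeight K n l • stdVec K n (l - 1)) (fun l hl => ?_) l
  rcases Nat.lt_or_eq_of_le (Nat.succ_le_of_lt hl) with h | rfl
  · rw [stdVec_eq_zero (l := l - 1) (by omega), smul_zero]
  · rw [Nat.succ_eq_add_one, dunklWeight_top, zero_smul]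

lemma parity_stdVec (l : ℕ) : parity K n (stdVec K n l) = (-1 : K) ^ l • stdVec K n l :=
  constr_stdVec (v := fun l => (-1 : K) ^ l • stdVec K n l)
    (fun l hl => by rw [stdVec_eq_zero hl, smul_zero]) l

lemma parity_apply (v : Fin (2 * n + 1) → K) (k : Fin (2 * n + 1)) :
    parity K n v k = (-1) ^ (k : ℕ) * v k := by
  simp [parity, Module.Basis.constr_apply_fintype, stdVec, Fin.val_inj, mul_comm]

lemma end_ext_stdVec {A B : Module.End K (Fin (2 * n + 1) → K)}
    (h : ∀ l, A (stdVec K n l) = B (stdVec K n l)) : A = B :=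
  (Pi.basisFun K _).ext fun l => by rw [basisFun_eq_stdVec, h]

lemma lower_mul_raise :
    lower K n * raise K n = raise K n * lower K n + 1 - (2 * n + 1 : K) • parity K n := by
  refine end_ext_stdVec fun l => ?_
  have hraise : dunklWeight K n l • stdVec K n (l - 1 + 1) = dunklWeight K n l • stdVec K n l := by
    rcases l with _ | l
    · simp [dunklWeight_zero]
    · rfl
  simp only [Module.End.mul_apply, LinearMap.sub_apply, LinearMap.add_apply, LinearMap.smul_apply,
    Module.End.one_apply, raise_stdVec, lower_stdVec, parity_stdVec, map_smul, hraise,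
    Nat.add_sub_cancel, dunklWeight_succ]
  module

lemma parity_mul_raise : parity K n * raise K n = -raise K n * parity K n :=
  end_ext_stdVec fun l => by simp [raise_stdVec, parity_stdVec, pow_succ]

lemma mul_pow_of_dunkl_relation {A : Type*} [Ring A] {x y s : A} (hyx : y * x = x * y + 1 - s)
    (hsx : s * x = -x * s) (a : ℕ) :
    y * x ^ a = x ^ a * y + x ^ (a - 1) * (a - if Odd a then s else 0) := by
  induction a with
  | zero => simp
  | succ a ih =>
    have hlast : x ^ (a - 1) * (a - if Odd a then s else 0) * x =
        x ^ a * (a + if Odd a then s else 0) := by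
      rcases a with _ | a
      · simp
      · rw [Nat.add_sub_cancel, pow_succ, mul_assoc, mul_assoc]
        congr 1
        split_ifs
        · rw [sub_mul, mul_add, hsx, (Nat.cast_commute _ x).eq]
          noncomm_ring
        · rw [sub_zero, add_zero, (Nat.cast_commute _ x).eq]
    rw [pow_succ, ← mul_assoc, ih, add_mul, hlast, mul_assoc _ y, hyx, Nat.add_sub_cancel]
    by_cases ha : Odd a
    · simp only [ha, Nat.odd_add_one, not_true, if_true, if_false]
      push_cast
      noncomm_ring
    · simp only [ha, Nat.odd_add_one, not_false_iff, if_true, if_false]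
      push_cast
      noncomm_ring

lemma raise_pow_stdVec (a l : ℕ) : (raise K n ^ a) (stdVec K n l) = stdVec K n (l + a) := by
  induction a with
  | zero => simp
  | succ a ih => rw [pow_succ', Module.End.mul_apply, ih, raise_stdVec, add_assoc]

lemma lower_pow_stdVec (b l : ℕ) : (lower K n ^ b) (stdVec K n l) =
    (∏ t ∈ Finset.range b, dunklWeight K n (l - t)) • stdVec K n (l - b) := by
  induction b with
  | zero => simp
  | succ b ih =>
    rw [pow_succ', Module.End.mul_apply, ih, map_smul, lower_stdVec, smul_smul,
      Finset.prod_range_succ, Nat.sub_sub]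

variable (K n) in
/-- The vectors obtained from the odd monomials `x ^ (2 * j + 1)` by lowering `b` times and then
raising `a` times. -/
noncomputable def slotVec (a b j : ℕ) : Fin (2 * n + 1) → K :=
  (raise K n ^ a * lower K n ^ b) (stdVec K n (2 * j + 1))

lemma slotVec_eq (a b j : ℕ) : slotVec K n a b j =
    (∏ t ∈ Finset.range b, dunklWeight K n (2 * j + 1 - t)) • stdVec K n (2 * j + 1 - b + a) := by
  rw [slotVec, Module.End.mul_apply, lower_pow_stdVec, map_smul, raise_pow_stdVec]

lemma slotVec_eq_zero {b j : ℕ} (hb : 2 * j + 1 < b) (a : ℕ) : slotVec K n a b j = 0 := by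
  have hzero : ∏ t ∈ Finset.range b, dunklWeight K n (2 * j + 1 - t) = 0 :=
    Finset.prod_eq_zero (Finset.mem_range.mpr hb) (by rw [Nat.sub_self, dunklWeight_zero])
  rw [slotVec_eq, hzero, zero_smul]

lemma raise_slotVec (a b j : ℕ) : raise K n (slotVec K n a b j) = slotVec K n (a + 1) b j := by
  simp only [slotVec, Module.End.mul_apply, pow_succ']

lemma parity_slotVec (a b j : ℕ) :
    parity K n (slotVec K n a b j) = (-1 : K) ^ (a + b + 1) • slotVec K n a b j := by
  rcases le_or_gt b (2 * j + 1) with hb | hb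
  · rw [slotVec_eq, map_smul, parity_stdVec, smul_comm,
      neg_one_pow_congr (n := a + b + 1) (by grind)]
  · rw [slotVec_eq_zero hb, map_zero, smul_zero]

lemma lower_slotVec (a b j : ℕ) : lower K n (slotVec K n a b j) = slotVec K n a (b + 1) j +
    ((a : K) - if Odd a then (2 * n + 1 : K) * (-1) ^ (b + 1) else 0) •
      slotVec K n (a - 1) b j := by
  have hrel := mul_pow_of_dunkl_relation (lower_mul_raise (K := K) (n := n))
    (by rw [smul_mul_assoc, parity_mul_raise, mul_smul_comm]) a
  have hparity := parity_slotVec (K := K) (n := n) 0 b j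
  simp only [slotVec, pow_zero, one_mul, zero_add] at hparity
  have hcast (v : Fin (2 * n + 1) → K) :
      (a : Module.End K (Fin (2 * n + 1) → K)) v = (a : K) • v := by
    rw [Module.End.natCast_apply, Nat.cast_smul_eq_nsmul]
  rw [slotVec, ← Module.End.mul_apply, ← mul_assoc, hrel]
  split_ifs <;>
  simp only [slotVec, Module.End.mul_apply, LinearMap.add_apply, LinearMap.sub_apply,
    LinearMap.smul_apply, hcast, hparity, pow_succ', smul_smul, sub_smul,
    map_sub, map_smul, sub_zero]

end RankOne

section OrbitMap

variable (K : Type*) [CommRing K] (n : ℕ)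

/-- The tensor obtained from the alternating tensor `x ∧ x³ ∧ ⋯ ∧ x ^ (2 * n - 1)` by lowering
`s (inr i)` times and then raising `s (inl i)` times in the `i`-th slot, for every `i`. -/
noncomputable def orbitVec (s : Fin n ⊕ Fin n →₀ ℕ) : (Fin n → Fin (2 * n + 1)) → K :=
  slater fun i j => slotVec K n (s (Sum.inl i)) (s (Sum.inr i)) j

/-- The linear map sending the monomial `x ^ a * y ^ b` to the corresponding `orbitVec`. It models
the associated graded of the finite-dimensional representation of the rational Cherednik algebra
of type `Bₙ` that Gordon used to bound the diagonal coinvariants. -/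
noncomputable def orbitMap :
    MvPolynomial (Fin n ⊕ Fin n) K →ₗ[K] (Fin n → Fin (2 * n + 1)) → K :=
  (basisMonomials (Fin n ⊕ Fin n) K).constr K (orbitVec K n)

variable {K n}

lemma orbitMap_monomial (s : Fin n ⊕ Fin n →₀ ℕ) (c : K) :
    orbitMap K n (monomial s c) = c • orbitVec K n s := by
  have hbasis : orbitMap K n (monomial s 1) = orbitVec K n s :=
    (basisMonomials (Fin n ⊕ Fin n) K).constr_basis K (orbitVec K n) s
  have hsmul : monomial s c = c • monomial s (1 : K) := by simp [smul_monomial]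
  rw [hsmul, map_smul, hbasis]

lemma orbitVec_eq_slater_update {s t : Fin n ⊕ Fin n →₀ ℕ} {i : Fin n}
    (hinl : ∀ j, j ≠ i → t (Sum.inl j) = s (Sum.inl j))
    (hinr : ∀ j, j ≠ i → t (Sum.inr j) = s (Sum.inr j)) :
    orbitVec K n t = slater (Function.update
      (fun i j : Fin n => slotVec K n (s (Sum.inl i)) (s (Sum.inr i)) j) i
      fun j => slotVec K n (t (Sum.inl i)) (t (Sum.inr i)) j) := by
  unfold orbitVec
  congr 1
  ext a j
  by_cases h : a = i
  · subst h
    simp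
  · simp [h, hinl a h, hinr a h]

lemma slotMap_raise_orbitVec (i : Fin n) (s : Fin n ⊕ Fin n →₀ ℕ) :
    slotMap i (raise K n) (orbitVec K n s) = orbitVec K n (s + Finsupp.single (Sum.inl i) 1) := by
  rw [orbitVec_eq_slater_update (s := s) (t := s + _) (i := i) (fun j hj => by simp [hj])
    (by simp), orbitVec, slotMap_slater]
  simp [raise_slotVec]

lemma exists_slotMap_lower_orbitVec (i : Fin n) (s : Fin n ⊕ Fin n →₀ ℕ) : ∃ d : K,
    slotMap i (lower K n) (orbitVec K n s) =
      orbitVec K n (s + Finsupp.single (Sum.inr i) 1) +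
        d • orbitVec K n (s - Finsupp.single (Sum.inl i) 1) := by
  have hadd := orbitVec_eq_slater_update (K := K) (s := s)
    (t := s + Finsupp.single (Sum.inr i) 1) (i := i) (by simp) (fun j hj => by simp [hj])
  have hsub := orbitVec_eq_slater_update (K := K) (s := s)
    (t := s - Finsupp.single (Sum.inl i) 1) (i := i) (fun j hj => by simp [hj]) (by simp)
  refine ⟨s (Sum.inl i) -
    if Odd (s (Sum.inl i)) then (2 * n + 1 : K) * (-1) ^ (s (Sum.inr i) + 1) else 0, ?_⟩
  rw [hadd, hsub, ← slater_update_smul, ← slater_update_add, orbitVec, slotMap_slater]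
  simp only [lower_slotVec]
  congr 2
  ext j
  simp

lemma orbitVec_mapDomain_perm (σ : Equiv.Perm (Fin n)) (s : Fin n ⊕ Fin n →₀ ℕ)
    (k : Fin n → Fin (2 * n + 1)) :
    orbitVec K n (s.mapDomain (Sum.map σ σ)) k = Equiv.Perm.sign σ • orbitVec K n s (k ∘ σ) := by
  have hinj : Function.Injective (Sum.map σ σ) := σ.injective.sumMap σ.injective
  have hinl (i : Fin n) : s.mapDomain (Sum.map σ σ) (Sum.inl (σ i)) = s (Sum.inl i) :=
    Finsupp.mapDomain_apply hinj s (Sum.inl i)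
  have hinr (i : Fin n) : s.mapDomain (Sum.map σ σ) (Sum.inr (σ i)) = s (Sum.inr i) :=
    Finsupp.mapDomain_apply hinj s (Sum.inr i)
  have hcomp := slater_comp_comp_perm (fun i j : Fin n => slotVec K n
    (s.mapDomain (Sum.map σ σ) (Sum.inl i)) (s.mapDomain (Sum.map σ σ) (Sum.inr i)) j) σ k
  simp only [Function.comp_def, hinl, hinr] at hcomp
  rw [← inv_smul_eq_iff, Int.units_inv_eq_self]
  exact hcomp.symm

lemma prod_pow_mul_orbitVec (ε : Fin n → ℤˣ) (s : Fin n ⊕ Fin n →₀ ℕ)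
    (k : Fin n → Fin (2 * n + 1)) :
    (∏ i, ((ε i : ℤ) : K) ^ (s (Sum.inl i) + s (Sum.inr i))) * orbitVec K n s k =
      (∏ i, ((ε i : ℤ) : K) ^ ((k i : ℕ) + 1)) * orbitVec K n s k := by
  rw [orbitVec, slater, ← Matrix.det_mul_column, ← Matrix.det_mul_column]
  congr 1
  ext i j
  have hparity := congrFun
    (parity_slotVec (K := K) (n := n) (s (Sum.inl i)) (s (Sum.inr i)) j) (k i)
  rw [parity_apply, Pi.smul_apply, smul_eq_mul, pow_succ] at hparity
  rcases Int.units_eq_one_or (ε i) with h | h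
  · simp [h]
  · simp only [h, Matrix.of_apply, Units.val_neg, Units.val_one, Int.cast_neg, Int.cast_one]
    linear_combination hparity

lemma exists_orbitVec_eq_smul_single [CharZero K] [IsDomain K] (a : Fin n → Fin (2 * n + 1)) :
    ∃ s, ∃ c : K, c ≠ 0 ∧ orbitVec K n s = c • Pi.single a 1 := by
  let weight (i j : Fin n) : K :=
    ∏ t ∈ Finset.range (2 * i + 1), dunklWeight K n (2 * j + 1 - t)
  refine ⟨Finsupp.equivFunOnFinite.symm (Sum.elim (fun i => a i) fun i => 2 * i + 1),
    ∏ i, weight i i, Finset.prod_ne_zero_iff.mpr fun i _ => Finset.prod_ne_zero_iff.mpr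
      fun t ht => ?_, funext fun k => ?_⟩
  · have := Finset.mem_range.mp ht
    exact dunklWeight_ne_zero (by omega) (by omega)
  · rw [orbitVec, slater, Matrix.det_of_isUpperTriangular]
    · simp [slotVec_eq, stdVec, weight, Pi.single_apply, Finset.prod_ite_zero, Fin.val_inj,
        funext_iff]
    · intro i j hij
      have hij : (j : ℕ) < i := hij
      simp [slotVec_eq_zero (show 2 * (j : ℕ) + 1 < 2 * i + 1 by omega)]

lemma range_orbitMap {K : Type*} [Field K] [CharZero K] :
    LinearMap.range (orbitMap K n) = ⊤ := by
  rw [eq_top_iff, ← (Pi.basisFun K (Fin n → Fin (2 * n + 1))).span_eq, Submodule.span_le]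
  rintro _ ⟨a, rfl⟩
  obtain ⟨s, c, hc, hs⟩ := exists_orbitVec_eq_smul_single (K := K) a
  refine ⟨monomial s c⁻¹, ?_⟩
  rw [orbitMap_monomial, hs, smul_smul, inv_mul_cancel₀ hc, one_smul, Pi.basisFun_apply]

end OrbitMap

section SignedPermutations

variable {n : ℕ}

lemma bAct_monomial (ε : Fin n → ℤˣ) (σ : Equiv.Perm (Fin n)) (s : Fin n ⊕ Fin n →₀ ℕ) (c : ℂ) :
    bAct n ε σ (monomial s c) =
      (∏ i, ((ε i : ℤ) : ℂ) ^ (s (Sum.inl i) + s (Sum.inr i))) •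
        monomial (s.mapDomain (Sum.map σ σ)) c := by
  have hinj : Function.Injective (Sum.map σ σ) := σ.injective.sumMap σ.injective
  rw [bAct, aeval_monomial, Finsupp.prod_fintype _ _ (fun _ => pow_zero _),
    Fintype.prod_sum_type, monomial_eq (s := s.mapDomain _),
    Finsupp.prod_mapDomain_index_inj hinj, Finsupp.prod_fintype _ _ (fun _ => pow_zero _),
    Fintype.prod_sum_type]
  simp only [Sum.elim_inl, Sum.elim_inr, Sum.map_inl, Sum.map_inr, smul_eq_C_mul, mul_pow,
    Finset.prod_mul_distrib, pow_add, map_mul, map_prod, map_pow, algebraMap_eq]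
  ring

lemma prod_mulSingle_neg_one_pow (i : Fin n) (g : Fin n → ℕ) :
    ∏ j, (((Pi.mulSingle i (-1 : ℤˣ) : Fin n → ℤˣ) j : ℤ) : ℂ) ^ g j = (-1) ^ g i := by
  rw [Finset.prod_eq_single i (fun j _ hj => by simp [hj]) (by simp)]
  simp

lemma homogeneousComponent_bAct (ε : Fin n → ℤˣ) (σ : Equiv.Perm (Fin n))
    (P : MvPolynomial (Fin n ⊕ Fin n) ℂ) (m : ℕ) :
    homogeneousComponent m (bAct n ε σ P) = bAct n ε σ (homogeneousComponent m P) := by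
  induction P using MvPolynomial.induction_on' with
  | monomial s c =>
    have hmap := isHomogeneous_monomial c (Finsupp.degree_mapDomain (Sum.map σ σ) s)
    rw [bAct_monomial, map_smul, homogeneousComponent_of_mem hmap,
      homogeneousComponent_of_mem (isHomogeneous_monomial c rfl)]
    split_ifs
    · rw [bAct_monomial]
    · rw [map_zero, smul_zero]
  | add P Q hP hQ => simp only [map_add, hP, hQ]

variable (n) in
/-- The polynomials on which `W(Bₙ)` acts through the `p`-th power of the character
`(ε, σ) ↦ ∏ i, ε i`. -/
def signIsotypic (p : ℕ) : Submodule ℂ (MvPolynomial (Fin n ⊕ Fin n) ℂ) where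
  carrier := {P | ∀ ε σ, bAct n ε σ P = (∏ i, ((ε i : ℤ) : ℂ)) ^ p • P}
  zero_mem' ε σ := by simp
  add_mem' hP hQ ε σ := by rw [map_add, hP, hQ, smul_add]
  smul_mem' c P hP ε σ := by rw [map_smul, hP, smul_comm]

lemma homogeneousComponent_mem_signIsotypic {p : ℕ} {P : MvPolynomial (Fin n ⊕ Fin n) ℂ}
    (hP : P ∈ signIsotypic n p) (m : ℕ) : homogeneousComponent m P ∈ signIsotypic n p :=
  fun ε σ => by rw [← homogeneousComponent_bAct, hP, map_smul]

lemma orbitMap_bAct (ε : Fin n → ℤˣ) (σ : Equiv.Perm (Fin n))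
    (P : MvPolynomial (Fin n ⊕ Fin n) ℂ) (k : Fin n → Fin (2 * n + 1)) :
    orbitMap ℂ n (bAct n ε σ P) k = Equiv.Perm.sign σ •
      ((∏ i, ((ε i : ℤ) : ℂ) ^ ((k (σ i) : ℕ) + 1)) * orbitMap ℂ n P (k ∘ σ)) := by
  induction P using MvPolynomial.induction_on' with
  | monomial s c =>
    have hsign := prod_pow_mul_orbitVec (K := ℂ) ε s (k ∘ σ)
    simp only [bAct_monomial, map_smul, orbitMap_monomial, Pi.smul_apply, smul_eq_mul,
      orbitVec_mapDomain_perm, Units.smul_def, zsmul_eq_mul, Function.comp_apply] at hsign ⊢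
    linear_combination c * ((Equiv.Perm.sign σ : ℤ) : ℂ) * hsign
  | add P Q hP hQ => simp only [map_add, Pi.add_apply, hP, hQ, mul_add, smul_add]

/-- The indices `k : Fin (2 * n + 1)` for which `k + p` is odd. -/
def parityClass (n p : ℕ) : Finset (Fin (2 * n + 1)) :=
  Finset.univ.filter fun k => Odd ((k : ℕ) + p)

lemma mem_parityClass {p : ℕ} {k : Fin (2 * n + 1)} :
    k ∈ parityClass n p ↔ Odd ((k : ℕ) + p) := by simp [parityClass]

lemma card_parityClass_le {p : ℕ} (hp : p ≤ 1) : (parityClass n p).card ≤ n + p := by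
  rw [← Finset.card_range (n + p)]
  refine Finset.card_le_card_of_injOn (fun k => (k : ℕ) / 2) (fun k hk => ?_) fun k hk l hl h => ?_
  · rw [Finset.mem_coe, mem_parityClass, Nat.odd_iff] at hk
    rw [Finset.coe_range, Set.mem_Iio, Nat.div_lt_iff_lt_mul two_pos]
    omega
  · rw [Finset.mem_coe, mem_parityClass, Nat.odd_iff] at hk hl
    have : (k : ℕ) / 2 = l / 2 := h
    omega

lemma orbitMap_mem_antisymmetricOn {p : ℕ} {P : MvPolynomial (Fin n ⊕ Fin n) ℂ}
    (hP : P ∈ signIsotypic n p) :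
    orbitMap ℂ n P ∈ antisymmetricOn ℂ (Fin n) (parityClass n p : Set (Fin (2 * n + 1))) := by
  refine ⟨fun k i hk => ?_, fun σ k => ?_⟩
  · have hchar := prod_mulSingle_neg_one_pow i fun _ => 1
    have hflip := orbitMap_bAct (Pi.mulSingle i (-1)) 1 P k
    have hsign := prod_mulSingle_neg_one_pow i fun j => (k j : ℕ) + 1
    simp only [pow_one] at hchar
    simp only [hP (Pi.mulSingle i (-1)) 1, hchar, map_smul, Pi.smul_apply, Equiv.Perm.sign_one,
      one_smul, Equiv.Perm.coe_one, id_eq, Function.comp_id, smul_eq_mul, hsign] at hflip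
    rw [Finset.mem_coe, mem_parityClass, Nat.not_odd_iff_even] at hk
    have hpow : (-1 : ℂ) ^ p = (-1) ^ (k i : ℕ) := neg_one_pow_congr (by grind)
    rw [hpow, pow_succ, mul_neg_one, neg_mul, self_eq_neg, mul_eq_zero] at hflip
    exact hflip.resolve_left (pow_ne_zero _ (neg_ne_zero.mpr one_ne_zero))
  · have hperm := orbitMap_bAct 1 σ P k
    rw [hP] at hperm
    simp only [Pi.one_apply, Units.val_one, Int.cast_one, one_pow, Finset.prod_const_one, one_smul,
      one_mul] at hperm
    rw [hperm, smul_smul, Int.units_mul_self, one_smul]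

lemma finrank_map_orbitMap_signIsotypic_le {p : ℕ} (hp : p ≤ 1) :
    Module.finrank ℂ ((signIsotypic n p).map (orbitMap ℂ n)) ≤ (n + p).choose n := by
  have hle : (signIsotypic n p).map (orbitMap ℂ n) ≤
      antisymmetricOn ℂ (Fin n) (parityClass n p : Set (Fin (2 * n + 1))) :=
    Submodule.map_le_iff_le_comap.mpr fun _ hP => orbitMap_mem_antisymmetricOn hP
  calc _ ≤ _ := Submodule.finrank_mono hle
    _ ≤ _ := finrank_antisymmetricOn_le n _
    _ ≤ _ := Nat.choose_le_choose n (card_parityClass_le hp)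

lemma orbitMap_one_ne_zero : orbitMap ℂ n 1 ≠ 0 := by
  let oddIndex (i : Fin n) : Fin (2 * n + 1) := ⟨2 * i + 1, by omega⟩
  have hM : (Matrix.of fun i j : Fin n => slotVec ℂ n 0 0 j (oddIndex i)) = 1 := by
    ext i j
    simp [slotVec, stdVec, oddIndex, Matrix.one_apply, Fin.ext_iff]
  have hone : orbitMap ℂ n 1 oddIndex = 1 := by
    rw [← C_1, C_apply, orbitMap_monomial, one_smul, orbitVec, slater]
    simp only [Finsupp.coe_zero, Pi.zero_apply, hM, Matrix.det_one]
  exact fun h => zero_ne_one ((congrFun h oddIndex).symm.trans hone)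

lemma exists_orbitMap_eq_smul_orbitMap_one {P : MvPolynomial (Fin n ⊕ Fin n) ℂ}
    (hP : P ∈ signIsotypic n 0) : ∃ c : ℂ, orbitMap ℂ n P = c • orbitMap ℂ n 1 := by
  have hone : (1 : MvPolynomial (Fin n ⊕ Fin n) ℂ) ∈ signIsotypic n 0 := fun ε σ => by simp
  have hrank := finrank_map_orbitMap_signIsotypic_le (n := n) zero_le_one
  rw [add_zero, Nat.choose_self, finrank_le_one_iff] at hrank
  obtain ⟨v, hv⟩ := hrank
  obtain ⟨a, ha⟩ := hv ⟨_, Submodule.mem_map_of_mem hone⟩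
  obtain ⟨b, hb⟩ := hv ⟨_, Submodule.mem_map_of_mem hP⟩
  replace ha : a • v.1 = orbitMap ℂ n 1 := congrArg Subtype.val ha
  replace hb : b • v.1 = orbitMap ℂ n P := congrArg Subtype.val hb
  have ha0 : a ≠ 0 := fun h => orbitMap_one_ne_zero (by rw [← ha, h, zero_smul])
  exact ⟨b * a⁻¹, by rw [← ha, ← hb, smul_smul, inv_mul_cancel_right₀ ha0]⟩

end SignedPermutations

section Filtration

lemma homogeneousComponent_succ_X_mul {R τ : Type*} [CommSemiring R] (v : τ)
    (P : MvPolynomial τ R) (m : ℕ) :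
    homogeneousComponent (m + 1) (X v * P) = X v * homogeneousComponent m P := by
  induction P using MvPolynomial.induction_on' with
  | monomial s c =>
    have hs : (monomial s c).IsHomogeneous s.degree := isHomogeneous_monomial c rfl
    rw [homogeneousComponent_of_mem hs,
      homogeneousComponent_of_mem (add_comm 1 s.degree ▸ (isHomogeneous_X R v).mul hs)]
    simp only [Nat.add_right_cancel_iff, mul_ite, mul_zero]
  | add P Q hP hQ => simp only [map_add, mul_add, hP, hQ]

lemma homogeneousComponent_zero_X_mul {R τ : Type*} [CommSemiring R] (v : τ)
    (P : MvPolynomial τ R) : homogeneousComponent 0 (X v * P) = 0 := by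
  rw [homogeneousComponent_zero, ← constantCoeff_eq, map_mul, constantCoeff_X, zero_mul, C_0]

variable (K : Type*) [CommRing K] (n : ℕ)

/-- The span of the orbit vectors of degree less than `m`. -/
noncomputable def orbitSpanLT (m : ℕ) : Submodule K ((Fin n → Fin (2 * n + 1)) → K) :=
  Submodule.span K (orbitVec K n '' {s | s.degree < m})

variable {K n}

lemma orbitVec_mem_orbitSpanLT {m : ℕ} {s : Fin n ⊕ Fin n →₀ ℕ} (hs : s.degree < m) :
    orbitVec K n s ∈ orbitSpanLT K n m :=
  Submodule.subset_span ⟨s, hs, rfl⟩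

lemma slotMap_raise_mem_orbitSpanLT {m : ℕ} (i : Fin n) {F : (Fin n → Fin (2 * n + 1)) → K}
    (hF : F ∈ orbitSpanLT K n m) : slotMap i (raise K n) F ∈ orbitSpanLT K n (m + 1) := by
  suffices h : orbitSpanLT K n m ≤ (orbitSpanLT K n (m + 1)).comap (slotMap i (raise K n)) from h hF
  refine Submodule.span_le.mpr ?_
  rintro _ ⟨s, hs, rfl⟩
  rw [SetLike.mem_coe, Submodule.mem_comap, slotMap_raise_orbitVec]
  exact orbitVec_mem_orbitSpanLT (by simpa using hs)

lemma slotMap_lower_mem_orbitSpanLT {m : ℕ} (i : Fin n) {F : (Fin n → Fin (2 * n + 1)) → K}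
    (hF : F ∈ orbitSpanLT K n m) : slotMap i (lower K n) F ∈ orbitSpanLT K n (m + 1) := by
  suffices h : orbitSpanLT K n m ≤ (orbitSpanLT K n (m + 1)).comap (slotMap i (lower K n)) from h hF
  refine Submodule.span_le.mpr ?_
  rintro _ ⟨s, hs, rfl⟩
  obtain ⟨d, hd⟩ := exists_slotMap_lower_orbitVec (K := K) i s
  rw [SetLike.mem_coe, Submodule.mem_comap, hd]
  refine add_mem (orbitVec_mem_orbitSpanLT (by simpa using hs))
    (Submodule.smul_mem _ _ (orbitVec_mem_orbitSpanLT ?_))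
  exact ((Finsupp.degree_mono tsub_le_self).trans_lt hs).trans (Nat.lt_succ_self m)

lemma orbitMap_X_inl_mul (i : Fin n) (P : MvPolynomial (Fin n ⊕ Fin n) K) :
    orbitMap K n (X (Sum.inl i) * P) = slotMap i (raise K n) (orbitMap K n P) := by
  induction P using MvPolynomial.induction_on' with
  | monomial s c =>
    rw [X, monomial_mul, one_mul, orbitMap_monomial, orbitMap_monomial, map_smul,
      slotMap_raise_orbitVec, add_comm s]
  | add P Q hP hQ => simp only [map_add, mul_add, hP, hQ]

lemma orbitMap_X_inr_mul_sub_mem (i : Fin n) (P : MvPolynomial (Fin n ⊕ Fin n) K) (m : ℕ) :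
    orbitMap K n (X (Sum.inr i) * homogeneousComponent m P) -
      slotMap i (lower K n) (orbitMap K n (homogeneousComponent m P)) ∈
        orbitSpanLT K n (m + 1) := by
  induction P using MvPolynomial.induction_on' with
  | monomial s c =>
    rw [homogeneousComponent_of_mem (isHomogeneous_monomial c rfl)]
    split_ifs with h
    · obtain ⟨d, hd⟩ := exists_slotMap_lower_orbitVec (K := K) i s
      rw [X, monomial_mul, one_mul, orbitMap_monomial, orbitMap_monomial, map_smul, hd,
        add_comm s, smul_add, sub_add_cancel_left]
      refine neg_mem (Submodule.smul_mem _ _ (Submodule.smul_mem _ _ ?_))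
      exact orbitVec_mem_orbitSpanLT
        (h ▸ Nat.lt_succ_of_le (Finsupp.degree_mono tsub_le_self))
    · simp only [mul_zero, map_zero, sub_zero, zero_mem]
  | add P Q hP hQ =>
    simp only [map_add, mul_add, add_sub_add_comm]
    exact add_mem hP hQ

variable (K n) in
/-- The ideal of the polynomials whose homogeneous components drop in the degree filtration of the
tensors; it is the annihilator of the generator of the associated graded module. -/
noncomputable def degreeDropIdeal : Ideal (MvPolynomial (Fin n ⊕ Fin n) K) where
  carrier := {Q | ∀ m, orbitMap K n (homogeneousComponent m Q) ∈ orbitSpanLT K n m}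
  zero_mem' m := by simp
  add_mem' hP hQ m := by
    rw [map_add, map_add]
    exact add_mem (hP m) (hQ m)
  smul_mem' P Q hQ := by
    rw [smul_eq_mul]
    induction P using MvPolynomial.induction_on with
    | C c =>
      intro m
      rw [homogeneousComponent_C_mul, ← smul_eq_C_mul, map_smul]
      exact Submodule.smul_mem _ _ (hQ m)
    | add P P' hP hP' =>
      intro m
      rw [add_mul, map_add, map_add]
      exact add_mem (hP m) (hP' m)
    | mul_X P v hP =>
      rintro (_ | m) <;> rw [mul_comm P, mul_assoc]
      · rw [homogeneousComponent_zero_X_mul, map_zero]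
        exact zero_mem _
      rw [homogeneousComponent_succ_X_mul]
      rcases v with i | i
      · rw [orbitMap_X_inl_mul]
        exact slotMap_raise_mem_orbitSpanLT i (hP m)
      · rw [← sub_add_cancel (orbitMap K n _)]
        exact add_mem (orbitMap_X_inr_mul_sub_mem i (P * Q) m)
          (slotMap_lower_mem_orbitSpanLT i (hP m))

lemma diagIdeal_le_degreeDropIdeal (n : ℕ) : diagIdeal n ≤ degreeDropIdeal ℂ n := by
  refine Ideal.span_le.mpr ?_
  rintro P ⟨hP, hP0⟩ (_ | m)
  · rw [homogeneousComponent_zero, ← constantCoeff_eq, hP0, C_0, map_zero]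
    exact zero_mem _
  · have hP' : P ∈ signIsotypic n 0 := fun ε σ => by rw [hP, pow_zero, one_smul]
    obtain ⟨c, hc⟩ := exists_orbitMap_eq_smul_orbitMap_one
      (homogeneousComponent_mem_signIsotypic hP' (m + 1))
    rw [hc, ← C_1, C_apply, orbitMap_monomial, one_smul]
    exact Submodule.smul_mem _ _ (orbitVec_mem_orbitSpanLT (by simp))

lemma orbitSpanLT_le_map_orbitMap {K : Type*} [Field K] {n : ℕ}
    {U : Submodule K (MvPolynomial (Fin n ⊕ Fin n) K)}
    (hU : ∀ P ∈ U, ∀ m, homogeneousComponent m P ∈ U)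
    (htop : U ⊔ (degreeDropIdeal K n).restrictScalars K = ⊤) (m : ℕ) :
    orbitSpanLT K n m ≤ U.map (orbitMap K n) := by
  induction m with
  | zero => simp [orbitSpanLT]
  | succ m ih =>
    refine Submodule.span_le.mpr ?_
    rintro _ ⟨s, hs, rfl⟩
    have hmem : monomial s (1 : K) ∈ U ⊔ (degreeDropIdeal K n).restrictScalars K :=
      htop ▸ Submodule.mem_top
    obtain ⟨P, hP, Q, hQ, hPQ⟩ := Submodule.mem_sup.mp hmem
    have hs' := orbitMap_monomial s (1 : K)
    rw [one_smul, ← homogeneousComponent_eq_self (isHomogeneous_monomial (1 : K) rfl), ← hPQ,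
      map_add, map_add] at hs'
    rw [← hs']
    refine add_mem (Submodule.mem_map_of_mem (hU P hP _)) (ih ?_)
    exact Submodule.span_mono
      (Set.image_mono fun t ht => lt_of_lt_of_le ht (Nat.le_of_lt_succ hs)) (hQ s.degree)

lemma map_orbitMap_eq_top {K : Type*} [Field K] [CharZero K] {n : ℕ}
    {U : Submodule K (MvPolynomial (Fin n ⊕ Fin n) K)}
    (hU : ∀ P ∈ U, ∀ m, homogeneousComponent m P ∈ U)
    (htop : U ⊔ (degreeDropIdeal K n).restrictScalars K = ⊤) : U.map (orbitMap K n) = ⊤ := by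
  rw [eq_top_iff, ← range_orbitMap]
  rintro _ ⟨P, rfl⟩
  induction P using MvPolynomial.induction_on' with
  | monomial s c =>
    rw [orbitMap_monomial]
    exact Submodule.smul_mem _ _ (orbitSpanLT_le_map_orbitMap hU htop (s.degree + 1)
      (orbitVec_mem_orbitSpanLT (Nat.lt_succ_self _)))
  | add P Q hP hQ => exact map_add (orbitMap K n) P Q ▸ add_mem hP hQ

end Filtration

section Polarization

variable {ι M A : Type*} [Fintype ι] [DecidableEq ι] [Add M] {g : ι → M → A}

lemma sum_perm_prod_mul_sum [CommSemiring A] (hg : ∀ i q r, g i (q + r) = g i q * g i r)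
    {a : ι} {s : Finset ι} (ha : a ∉ s) (e : ι → M) :
    (∑ σ : Equiv.Perm ι, ∏ i ∈ s, g (σ i) (e i)) * ∑ l, g l (e a) =
      ∑ l ∈ s, ∑ σ : Equiv.Perm ι, ∏ i ∈ s, g (σ i) (Function.update e l (e l + e a) i) +
        sᶜ.card • ∑ σ : Equiv.Perm ι, ∏ i ∈ insert a s, g (σ i) (e i) := by
  have hmul : (∑ σ : Equiv.Perm ι, ∏ i ∈ s, g (σ i) (e i)) * ∑ l, g l (e a) =
      ∑ l, ∑ σ : Equiv.Perm ι, (∏ i ∈ s, g (σ i) (e i)) * g (σ l) (e a) := by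
    rw [Finset.sum_comm, Finset.sum_mul]
    refine Finset.sum_congr rfl fun σ _ => ?_
    rw [← Finset.mul_sum, Equiv.sum_comp σ fun l => g l (e a)]
  rw [hmul, ← Finset.sum_add_sum_compl s, ← Finset.sum_const]
  congr 1
  · refine Finset.sum_congr rfl fun l hl => Finset.sum_congr rfl fun σ _ => ?_
    rw [← Finset.mul_prod_erase _ _ hl, ← Finset.mul_prod_erase s _ hl, Function.update_self,
      hg, mul_right_comm]
    congr 1
    refine Finset.prod_congr rfl fun i hi => ?_
    rw [Function.update_of_ne (Finset.ne_of_mem_erase hi)]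
  · refine Finset.sum_congr rfl fun l hl =>
      Fintype.sum_equiv (Equiv.mulRight (Equiv.swap l a)) _ _ fun σ => ?_
    rw [Finset.prod_insert ha, Equiv.coe_mulRight, Equiv.Perm.mul_apply, Equiv.swap_apply_right,
      mul_comm]
    congr 1
    refine Finset.prod_congr rfl fun i hi => ?_
    rw [Equiv.Perm.mul_apply, Equiv.swap_apply_of_ne_of_ne
      (ne_of_mem_of_not_mem hi (Finset.mem_compl.mp hl)) (ne_of_mem_of_not_mem hi ha)]

lemma sum_perm_prod_mem [CommRing A] [Algebra ℚ A] (hg : ∀ i q r, g i (q + r) = g i q * g i r)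
    {G : AddSubsemigroup M} {J : Ideal A} (hJ : ∀ q ∈ G, ∑ i, g i q ∈ J) {s : Finset ι}
    (hs : s.Nonempty) {e : ι → M} (he : ∀ i ∈ s, e i ∈ G) :
    ∑ σ : Equiv.Perm ι, ∏ i ∈ s, g (σ i) (e i) ∈ J := by
  induction s using Finset.induction_on generalizing e with
  | empty => exact absurd hs Finset.not_nonempty_empty
  | insert a s ha ih =>
    have hea := he a (Finset.mem_insert_self a s)
    have hmerged (l : ι) (hl : l ∈ s) :
        ∑ σ : Equiv.Perm ι, ∏ i ∈ s, g (σ i) (Function.update e l (e l + e a) i) ∈ J := by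
      refine ih ⟨l, hl⟩ fun i hi => ?_
      obtain rfl | hil := eq_or_ne i l
      · rw [Function.update_self]
        exact add_mem (he i (Finset.mem_insert_of_mem hl)) hea
      · rw [Function.update_of_ne hil]
        exact he i (Finset.mem_insert_of_mem hi)
    have hmem := J.mul_mem_left (∑ σ : Equiv.Perm ι, ∏ i ∈ s, g (σ i) (e i)) (hJ _ hea)
    rw [sum_perm_prod_mul_sum hg ha, J.add_mem_iff_right (sum_mem hmerged),
      ← Nat.cast_smul_eq_nsmul ℚ] at hmem
    have hcard : (sᶜ.card : ℚ) ≠ 0 :=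
      Nat.cast_ne_zero.mpr (Finset.card_ne_zero_of_mem (Finset.mem_compl.mpr ha))
    exact ((J.restrictScalars ℚ).smul_mem_iff hcard).mp hmem

end Polarization

section PowerSums

variable {n : ℕ}

/-- The monomial `xᵢᵃ yᵢᵇ` with exponents `q = (a, b)`. -/
noncomputable def pairMonomial {K : Type*} [CommSemiring K] (i : Fin n) (q : ℕ × ℕ) :
    MvPolynomial (Fin n ⊕ Fin n) K :=
  X (Sum.inl i) ^ q.1 * X (Sum.inr i) ^ q.2

lemma pairMonomial_add {K : Type*} [CommSemiring K] (i : Fin n) (q r : ℕ × ℕ) :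
    pairMonomial (K := K) i (q + r) = pairMonomial i q * pairMonomial i r := by
  simp only [pairMonomial, Prod.fst_add, Prod.snd_add, pow_add]
  ring

lemma bAct_one_monomial (σ : Equiv.Perm (Fin n)) (s : Fin n ⊕ Fin n →₀ ℕ) (c : ℂ) :
    bAct n 1 σ (monomial s c) =
      c • ∏ i, pairMonomial (σ i) (s (Sum.inl i), s (Sum.inr i)) := by
  rw [bAct, aeval_monomial, Finsupp.prod_fintype _ _ (fun _ => pow_zero _), Fintype.prod_sum_type]
  simp only [Algebra.smul_def, Sum.elim_inl, Sum.elim_inr, Pi.one_apply,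
    Units.val_one, Int.cast_one, map_one, one_mul, pairMonomial, Finset.prod_mul_distrib]

lemma even_of_coeff_ne_zero_of_mem_signIsotypic {P : MvPolynomial (Fin n ⊕ Fin n) ℂ}
    (hP : P ∈ signIsotypic n 0) {s : Fin n ⊕ Fin n →₀ ℕ} (hs : coeff s P ≠ 0) (i : Fin n) :
    Even (s (Sum.inl i) + s (Sum.inr i)) := by
  have hcoeff (Q : MvPolynomial (Fin n ⊕ Fin n) ℂ) :
      coeff s (bAct n (Pi.mulSingle i (-1)) 1 Q) =
        (-1) ^ (s (Sum.inl i) + s (Sum.inr i)) * coeff s Q := by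
    induction Q using MvPolynomial.induction_on' with
    | monomial t c =>
      rw [bAct_monomial, prod_mulSingle_neg_one_pow i fun i => t (Sum.inl i) + t (Sum.inr i),
        Equiv.Perm.coe_one, Sum.map_id_id, Finsupp.mapDomain_id, coeff_smul, smul_eq_mul,
        coeff_monomial]
      split_ifs with h
      · rw [h]
      · rw [mul_zero, mul_zero]
    | add Q Q' hQ hQ' => simp only [map_add, coeff_add, mul_add, hQ, hQ']
  have hfix := hcoeff P
  rw [hP, pow_zero, one_smul, right_eq_mul₀ hs] at hfix
  exact (neg_one_pow_eq_one_iff_even (by norm_num)).mp hfix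

lemma sum_bAct_monomial_mem {J : Ideal (MvPolynomial (Fin n ⊕ Fin n) ℂ)}
    (hJ : ∀ q : ℕ × ℕ, q ≠ 0 → Even (q.1 + q.2) → ∑ i, pairMonomial i q ∈ J)
    {s : Fin n ⊕ Fin n →₀ ℕ} (hs0 : s ≠ 0) (hs : ∀ i, Even (s (Sum.inl i) + s (Sum.inr i)))
    (c : ℂ) : ∑ σ : Equiv.Perm (Fin n), bAct n 1 σ (monomial s c) ∈ J := by
  let G : AddSubsemigroup (ℕ × ℕ) :=
    { carrier := {q | q ≠ 0 ∧ Even (q.1 + q.2)}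
      add_mem' := fun {q r} hq hr =>
        ⟨fun h => hq.1 (add_eq_zero.mp h).1, by simpa [add_add_add_comm] using hq.2.add hr.2⟩ }
  let e (i : Fin n) : ℕ × ℕ := (s (Sum.inl i), s (Sum.inr i))
  obtain ⟨i₀, hi₀⟩ : ∃ i, e i ≠ 0 := by
    by_contra! he
    refine hs0 ?_
    ext (i | i)
    exacts [congrArg Prod.fst (he i), congrArg Prod.snd (he i)]
  have hsupport (σ : Equiv.Perm (Fin n)) :
      ∏ i, pairMonomial (K := ℂ) (σ i) (e i) = ∏ i with e i ≠ 0, pairMonomial (σ i) (e i) := by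
    refine (Finset.prod_subset (Finset.filter_subset _ _) fun i _ hi => ?_).symm
    have hei : e i = 0 := by simpa using hi
    simp [pairMonomial, hei]
  have hmem := sum_perm_prod_mem (G := G) pairMonomial_add (fun q hq => hJ q hq.1 hq.2)
    ⟨i₀, Finset.mem_filter.mpr ⟨Finset.mem_univ i₀, hi₀⟩⟩
    fun i hi => ⟨(Finset.mem_filter.mp hi).2, hs i⟩
  simp only [← hsupport] at hmem
  simp only [bAct_one_monomial, ← Finset.smul_sum]
  exact (J.restrictScalars ℂ).smul_mem c hmem

lemma diagIdeal_le_of_sum_pairMonomial_mem {J : Ideal (MvPolynomial (Fin n ⊕ Fin n) ℂ)}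
    (hJ : ∀ q : ℕ × ℕ, q ≠ 0 → Even (q.1 + q.2) → ∑ i, pairMonomial i q ∈ J) :
    diagIdeal n ≤ J := by
  refine Ideal.span_le.mpr ?_
  rintro P ⟨hinv, hP0⟩
  have hP : P ∈ signIsotypic n 0 := fun ε σ => by rw [hinv, pow_zero, one_smul]
  have hsum : (Fintype.card (Equiv.Perm (Fin n)) : ℂ) • P =
      ∑ s ∈ P.support, ∑ σ, bAct n 1 σ (monomial s (coeff s P)) := by
    rw [Finset.sum_comm]
    simp only [← map_sum, support_sum_monomial_coeff, hinv, Finset.sum_const,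
      Nat.cast_smul_eq_nsmul, Finset.card_univ]
  have hmem : (Fintype.card (Equiv.Perm (Fin n)) : ℂ) • P ∈ J := by
    rw [hsum]
    refine sum_mem fun s hs => sum_bAct_monomial_mem hJ ?_
      (even_of_coeff_ne_zero_of_mem_signIsotypic hP (mem_support_iff.mp hs)) _
    rintro rfl
    exact mem_support_iff.mp hs hP0
  exact ((J.restrictScalars ℂ).smul_mem_iff (Nat.cast_ne_zero.mpr Fintype.card_ne_zero)).mp hmem

end PowerSums

section Finiteness

variable {n : ℕ}

/-- The coefficients of the polynomial `∏ j, (T - g j)` are invariant, so modulo `diagIdeal n` it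
is `T ^ n`. -/
lemma pow_mem_diagIdeal {g : Fin n → MvPolynomial (Fin n ⊕ Fin n) ℂ}
    (hg : ∀ ε σ i, bAct n ε σ (g i) = g (σ i)) (hg0 : ∀ i, constantCoeff (g i) = 0) (i : Fin n) :
    g i ^ n ∈ diagIdeal n := by
  let F := ∏ j, (Polynomial.X - Polynomial.C (g j))
  have hinv (ε σ) : F.map (bAct n ε σ).toRingHom = F := by
    simp only [F, Polynomial.map_prod, Polynomial.map_sub, Polynomial.map_X, Polynomial.map_C,
      AlgHom.toRingHom_eq_coe, RingHom.coe_coe, hg]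
    exact Equiv.prod_comp σ fun j => Polynomial.X - Polynomial.C (g j)
  have hconst : F.map constantCoeff = Polynomial.X ^ n := by simp [F, Polynomial.map_prod, hg0]
  have hmk : F.map (Ideal.Quotient.mk (diagIdeal n)) = Polynomial.X ^ n := by
    have hcoeff (k : ℕ) : Ideal.Quotient.mk (diagIdeal n) (F.coeff k) =
        Ideal.Quotient.mk (diagIdeal n) (C (constantCoeff (F.coeff k))) := by
      refine Ideal.Quotient.eq.mpr (Ideal.subset_span ⟨fun ε σ => ?_, by simp⟩)
      have hk : bAct n ε σ (F.coeff k) = F.coeff k := by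
        conv_rhs => rw [← hinv ε σ, Polynomial.coeff_map]
        rfl
      rw [map_sub, hk, ← algebraMap_eq, AlgHom.commutes]
    ext k
    rw [Polynomial.coeff_map, hcoeff, ← Polynomial.coeff_map, hconst, Polynomial.coeff_X_pow,
      Polynomial.coeff_X_pow]
    split_ifs <;> simp
  have heval : F.eval (g i) = 0 := by
    simp only [F, Polynomial.eval_prod]
    exact Finset.prod_eq_zero (Finset.mem_univ i) (by simp)
  rw [← Ideal.Quotient.eq_zero_iff_mem, map_pow, ← Polynomial.eval_X_pow, ← hmk,
    Polynomial.eval_map_apply, heval, map_zero]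

lemma X_pow_mem_diagIdeal (v : Fin n ⊕ Fin n) : X v ^ (2 * n) ∈ diagIdeal n := by
  have hsq (e : ℤˣ) : ((e : ℤ) : ℂ) ^ 2 = 1 := by
    rcases Int.units_eq_one_or e with rfl | rfl <;> simp
  rw [pow_mul]
  rcases v with i | i
  · exact pow_mem_diagIdeal (g := fun i => X (Sum.inl i) ^ 2)
      (fun ε σ i => by simp [bAct, smul_pow, hsq]) (fun i => by simp) i
  · exact pow_mem_diagIdeal (g := fun i => X (Sum.inr i) ^ 2)
      (fun ε σ i => by simp [bAct, smul_pow, hsq]) (fun i => by simp) i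

instance finite_quotient_diagIdeal :
    Module.Finite ℂ (MvPolynomial (Fin n ⊕ Fin n) ℂ ⧸ diagIdeal n) := by
  have : Algebra.IsIntegral ℂ (MvPolynomial (Fin n ⊕ Fin n) ℂ ⧸ diagIdeal n) := by
    refine ⟨fun P => ?_⟩
    obtain ⟨P, rfl⟩ := Ideal.Quotient.mk_surjective P
    induction P using MvPolynomial.induction_on with
    | C c => exact isIntegral_algebraMap
    | add P Q hP hQ => exact map_add (Ideal.Quotient.mk (diagIdeal n)) P Q ▸ hP.add hQ
    | mul_X P v hP =>
      rw [map_mul]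
      refine hP.mul ⟨Polynomial.X ^ (2 * n), Polynomial.monic_X_pow _, ?_⟩
      rw [Polynomial.eval₂_X_pow, ← map_pow,
        Ideal.Quotient.eq_zero_iff_mem.mpr (X_pow_mem_diagIdeal v)]
  exact Algebra.IsIntegral.finite

end Finiteness

section LoweringDerivations

variable (K : Type*) [CommRing K]

/-- The derivation of `K[Z_{(a,b)}]` lowering every index by `q`. It is dual to multiplication by
the polarized power sum `∑ i, xᵢ ^ q.1 * yᵢ ^ q.2`. -/
noncomputable def loweringDerivation (q : ℕ × ℕ) :
    Derivation K (MvPolynomial (ℕ × ℕ) K) (MvPolynomial (ℕ × ℕ) K) :=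
  mkDerivation K fun k => if q ≤ k then X (k - q) else 0

variable {K}

lemma loweringDerivation_X (q k : ℕ × ℕ) :
    loweringDerivation K q (X k) = if q ≤ k then X (k - q) else 0 := mkDerivation_X ..

lemma pderiv_loweringDerivation (q l : ℕ × ℕ) (f : MvPolynomial (ℕ × ℕ) K) :
    pderiv l (loweringDerivation K q f) =
      loweringDerivation K q (pderiv l f) + pderiv (l + q) f := by
  suffices h : ⁅pderiv l, loweringDerivation K q⁆ = pderiv (l + q) by
    rw [← h, Derivation.commutator_apply, add_sub_cancel]
  refine derivation_ext fun k => ?_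
  have hconst : loweringDerivation K q (Pi.single (M := fun _ => MvPolynomial _ K) l 1 k) = 0 := by
    rw [Pi.single_apply]
    split_ifs <;> simp
  rw [Derivation.commutator_apply, loweringDerivation_X, pderiv_X, pderiv_X, hconst, sub_zero,
    Pi.single_apply]
  by_cases hqk : q ≤ k
  · rw [if_pos hqk, pderiv_X, Pi.single_apply]
    simp only [tsub_eq_iff_eq_add_of_le hqk]
  · rw [if_neg hqk, map_zero, if_neg (by rintro rfl; exact hqk le_add_self)]

lemma constantCoeff_loweringDerivation (q : ℕ × ℕ) (f : MvPolynomial (ℕ × ℕ) K) :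
    constantCoeff (loweringDerivation K q f) = 0 := by
  induction f using MvPolynomial.induction_on with
  | C c => rw [← algebraMap_eq, Derivation.map_algebraMap, map_zero]
  | add f g hf hg => rw [map_add, map_add, hf, hg, add_zero]
  | mul_X f k hf =>
    rw [Derivation.leibniz, map_add, smul_eq_mul, smul_eq_mul, map_mul, map_mul, hf,
      loweringDerivation_X]
    split_ifs <;> simp

variable (K) in
/-- The value at the origin of the iterated partial derivative of multi-index `μ`. -/
noncomputable def derivAtZero {τ : Type*} (μ : τ →₀ ℕ) : MvPolynomial τ K →ₗ[K] K :=
  (μ.prod fun _ a => (a.factorial : K)) • lcoeff K μ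

lemma derivAtZero_zero {τ : Type*} (f : MvPolynomial τ K) :
    derivAtZero K 0 f = constantCoeff f := by
  simp [derivAtZero, lcoeff, constantCoeff_eq]

lemma derivAtZero_pderiv {τ : Type*} (μ : τ →₀ ℕ) (k : τ) (f : MvPolynomial τ K) :
    derivAtZero K μ (pderiv k f) = derivAtZero K (μ + Finsupp.single k 1) f := by
  classical
  have herase : (μ + Finsupp.single k 1).erase k = μ.erase k := by
    rw [Finsupp.erase_add, Finsupp.erase_single, add_zero]
  have hfactorial : (μ + Finsupp.single k 1).prod (fun _ a => (a.factorial : K)) =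
      (μ k + 1) * μ.prod fun _ a => (a.factorial : K) := by
    rw [← Finsupp.mul_prod_erase' _ k _ (by simp), ← Finsupp.mul_prod_erase' μ k _ (by simp),
      herase, Finsupp.add_apply, Finsupp.single_eq_same, Nat.factorial_succ]
    push_cast
    ring
  simp only [derivAtZero, LinearMap.smul_apply, lcoeff_apply, smul_eq_mul, coeff_pderiv,
    hfactorial]
  ring

lemma derivAtZero_loweringDerivation {ι : Type*} [DecidableEq ι] (q : ℕ × ℕ) (e : ι → ℕ × ℕ)
    (s : Finset ι) (f : MvPolynomial (ℕ × ℕ) K) :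
    derivAtZero K (∑ j ∈ s, Finsupp.single (e j) 1) (loweringDerivation K q f) = ∑ i ∈ s,
      derivAtZero K (∑ j ∈ s, Finsupp.single (Function.update e i (e i + q) j) 1) f := by
  induction s using Finset.induction_on generalizing f with
  | empty =>
    rw [Finset.sum_empty, Finset.sum_empty, derivAtZero_zero, constantCoeff_loweringDerivation]
  | insert a s ha ih =>
    have hne (j : ι) (hj : j ∈ s) : j ≠ a := ne_of_mem_of_not_mem hj ha
    rw [Finset.sum_insert ha, add_comm, ← derivAtZero_pderiv, pderiv_loweringDerivation, map_add,
      ih, derivAtZero_pderiv, Finset.sum_insert ha, add_comm, Finset.sum_insert ha,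
      Function.update_self, add_comm (Finsupp.single _ _)]
    congr 1
    · refine congrArg (fun μ => derivAtZero K (μ + _) f) (Finset.sum_congr rfl fun j hj => ?_)
      rw [Function.update_of_ne (hne j hj)]
    · refine Finset.sum_congr rfl fun i hi => ?_
      rw [derivAtZero_pderiv, Finset.sum_insert ha, Function.update_of_ne (hne i hi).symm,
        add_comm]

end LoweringDerivations

section PolarizationFunctional

/-- The exponent pairs `(aᵢ, bᵢ)` of the monomial `∏ i, xᵢ ^ aᵢ * yᵢ ^ bᵢ`. -/
def exponentPair {n : ℕ} (s : Fin n ⊕ Fin n →₀ ℕ) (i : Fin n) : ℕ × ℕ :=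
  (s (Sum.inl i), s (Sum.inr i))

/-- The multi-index counting how often each value of `e` is taken. -/
noncomputable def tally {n : ℕ} (e : Fin n → ℕ × ℕ) : ℕ × ℕ →₀ ℕ := ∑ i, Finsupp.single (e i) 1

/-- The polynomial `f` in the variables `Z_{(a,b)}` gives the linear functional on
`K[x₁,…,xₙ,y₁,…,yₙ]` whose value at `∏ i, xᵢ ^ aᵢ * yᵢ ^ bᵢ` is the derivative of `f` at the origin
with respect to `Z_{(a₁,b₁)}, …, Z_{(aₙ,bₙ)}`. -/
noncomputable def polarization (K : Type*) [CommRing K] (n : ℕ) :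
    MvPolynomial (ℕ × ℕ) K →ₗ[K] Module.Dual K (MvPolynomial (Fin n ⊕ Fin n) K) :=
  ((basisMonomials (Fin n ⊕ Fin n) K).constr K).toLinearMap ∘ₗ
    LinearMap.pi fun s => derivAtZero K (tally (exponentPair s))

variable {K : Type*} [CommRing K] {n : ℕ}

lemma polarization_monomial (f : MvPolynomial (ℕ × ℕ) K) (s : Fin n ⊕ Fin n →₀ ℕ) (c : K) :
    polarization K n f (monomial s c) = c * derivAtZero K (tally (exponentPair s)) f := by
  have hone : polarization K n f (monomial s 1) = derivAtZero K (tally (exponentPair s)) f :=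
    (basisMonomials (Fin n ⊕ Fin n) K).constr_basis K _ s
  rw [← hone, ← smul_eq_mul, ← map_smul, smul_monomial, smul_eq_mul, mul_one]

lemma tally_comp_perm (e : Fin n → ℕ × ℕ) (σ : Equiv.Perm (Fin n)) : tally (e ∘ σ) = tally e :=
  Equiv.sum_comp σ fun i => Finsupp.single (e i) 1

lemma exists_tally_eq (μ : ℕ × ℕ →₀ ℕ) (hμ : μ.degree = n) : ∃ e : Fin n → ℕ × ℕ, tally e = μ := by
  let l := (Finsupp.toMultiset μ).toList
  have hl : l.length = n := by
    rw [Multiset.length_toList, Finsupp.card_toMultiset, ← hμ]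
    rfl
  have hsum : Finsupp.toMultiset (tally fun i => l[i]) = Finsupp.toMultiset μ := by
    simp only [tally, map_sum, Finsupp.toMultiset_single, one_smul]
    calc ∑ i : Fin l.length, ({l[i]} : Multiset (ℕ × ℕ))
        = (l.map fun k => ({k} : Multiset (ℕ × ℕ))).sum := by
          simp [← List.sum_ofFn]
      _ = Finsupp.toMultiset μ := by
          rw [← Multiset.sum_coe, ← Multiset.map_coe, Multiset.coe_toList,
            Multiset.sum_map_singleton]
  subst hl
  refine ⟨fun i => l[i], ?_⟩
  rw [Finsupp.toMultiset_eq_iff.mp hsum, Finsupp.toMultiset_toFinsupp]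

lemma polarization_mul_pairMonomial (f : MvPolynomial (ℕ × ℕ) K) (s : Fin n ⊕ Fin n →₀ ℕ)
    (i : Fin n) (q : ℕ × ℕ) (c : K) :
    polarization K n f (monomial s c * pairMonomial i q) = c * derivAtZero K
      (tally (Function.update (exponentPair s) i (exponentPair s i + q))) f := by
  rw [pairMonomial, X_pow_eq_monomial, X_pow_eq_monomial, monomial_mul, monomial_mul,
    polarization_monomial, mul_one, mul_one]
  congr 4
  ext j : 1
  obtain rfl | hj := eq_or_ne j i
  · rw [Function.update_self]
    ext <;> simp [exponentPair]
  · rw [Function.update_of_ne hj]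
    simp [exponentPair, hj.symm]

lemma polarization_eq_zero_of_mem_diagIdeal {n : ℕ} {f : MvPolynomial (ℕ × ℕ) ℂ}
    (hf : ∀ q ≠ 0, Even (q.1 + q.2) → loweringDerivation ℂ q f = 0)
    {P : MvPolynomial (Fin n ⊕ Fin n) ℂ} (hP : P ∈ diagIdeal n) : polarization ℂ n f P = 0 := by
  let J : Ideal (MvPolynomial (Fin n ⊕ Fin n) ℂ) :=
    { carrier := {P | ∀ Q, polarization ℂ n f (Q * P) = 0}
      zero_mem' := fun Q => by rw [mul_zero, map_zero]
      add_mem' := fun hP hP' Q => by rw [mul_add, map_add, hP, hP', add_zero]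
      smul_mem' := fun R P hP Q => by rw [smul_eq_mul, ← mul_assoc, hP] }
  have hJ : diagIdeal n ≤ J := by
    refine diagIdeal_le_of_sum_pairMonomial_mem fun q hq0 hq Q => ?_
    induction Q using MvPolynomial.induction_on' with
    | monomial s c =>
      have hlower := derivAtZero_loweringDerivation q (exponentPair s) Finset.univ f
      rw [hf q hq0 hq, map_zero] at hlower
      simp only [Finset.mul_sum, map_sum, polarization_mul_pairMonomial]
      rw [← Finset.mul_sum]
      exact mul_eq_zero_of_right c hlower.symm
    | add Q Q' hQ hQ' => rw [add_mul, map_add, hQ, hQ', add_zero]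
  simpa only [one_mul] using hJ hP 1

lemma polarization_bAct {n : ℕ} {f : MvPolynomial (ℕ × ℕ) ℂ}
    (hf : f ∈ supported ℂ {k : ℕ × ℕ | Odd (k.1 + k.2)}) (ε : Fin n → ℤˣ)
    (σ : Equiv.Perm (Fin n)) (P : MvPolynomial (Fin n ⊕ Fin n) ℂ) :
    polarization ℂ n f (bAct n ε σ P) = (∏ i, ((ε i : ℤ) : ℂ)) * polarization ℂ n f P := by
  induction P using MvPolynomial.induction_on' with
  | monomial s c =>
    have htally : tally (exponentPair (s.mapDomain (Sum.map σ σ))) = tally (exponentPair s) := by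
      have hinj : Function.Injective (Sum.map σ σ) := σ.injective.sumMap σ.injective
      rw [← tally_comp_perm _ σ]
      congr 1
      ext i : 1
      exact Prod.ext (Finsupp.mapDomain_apply hinj s (Sum.inl i))
        (Finsupp.mapDomain_apply hinj s (Sum.inr i))
    rw [bAct_monomial, map_smul, polarization_monomial, polarization_monomial, htally, smul_eq_mul]
    by_cases hcoeff : coeff (tally (exponentPair s)) f = 0
    · simp [derivAtZero, hcoeff]
    · congr 1
      refine Finset.prod_congr rfl fun i _ => ?_
      have hodd : Odd (s (Sum.inl i) + s (Sum.inr i)) := by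
        refine mem_supported.mp hf ((mem_vars_iff_mem_support (exponentPair s i)).mpr
          ⟨_, mem_support_iff.mpr hcoeff, ?_⟩)
        simp only [tally, Finsupp.mem_support_iff, Finsupp.finsetSum_apply]
        exact fun h => by simpa using Finset.sum_eq_zero_iff.mp h i (Finset.mem_univ i)
      rcases Int.units_eq_one_or (ε i) with h | h <;> simp [h, hodd.neg_one_pow]
  | add P Q hP hQ => rw [map_add, map_add, map_add, hP, hQ, mul_add]

lemma eq_zero_of_polarization_eq_zero [IsDomain K] [CharZero K] {f : MvPolynomial (ℕ × ℕ) K}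
    (hf : f.IsHomogeneous n) (h : polarization K n f = 0) : f = 0 := by
  ext μ
  rw [coeff_zero]
  by_contra hμ
  have hdegree : μ.degree = n := by
    rw [Finsupp.degree_eq_weight_one]
    exact hf hμ
  obtain ⟨e, rfl⟩ := exists_tally_eq μ hdegree
  have heval := polarization_monomial f (Finsupp.equivFunOnFinite.symm
    (Sum.elim (fun i => (e i).1) fun i => (e i).2)) 1
  have he : exponentPair (Finsupp.equivFunOnFinite.symm
      (Sum.elim (fun i => (e i).1) fun i => (e i).2)) = e := rfl
  rw [h, LinearMap.zero_apply, he, one_mul, derivAtZero, LinearMap.smul_apply, lcoeff_apply,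
    smul_eq_mul, zero_eq_mul] at heval
  refine heval.elim (fun h0 => ?_) hμ
  exact (Finset.prod_ne_zero_iff.mpr fun k _ => Nat.cast_ne_zero.mpr (Nat.factorial_ne_zero _)) h0

end PolarizationFunctional

section SignIsotypicComplement

lemma finrank_add_finrank_map_le_of_le_dualAnnihilator {K V V' : Type*} [Field K] [AddCommGroup V]
    [Module K V] [AddCommGroup V'] [Module K V'] [FiniteDimensional K V'] {π : V →ₗ[K] V'}
    {M : Submodule K V} {D : Submodule K (Module.Dual K V)}
    (hker : D ≤ (LinearMap.ker π).dualAnnihilator) (hM : D ≤ M.dualAnnihilator) :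
    Module.finrank K D + Module.finrank K (M.map π) ≤ Module.finrank K V' := by
  have hD : D ≤ ((M.map π).dualAnnihilator).map π.dualMap := by
    intro φ hφ
    obtain ⟨ψ, rfl⟩ : φ ∈ LinearMap.range π.dualMap := by
      rw [LinearMap.range_dualMap_eq_dualAnnihilator_ker]
      exact hker hφ
    refine Submodule.mem_map_of_mem ((Submodule.mem_dualAnnihilator ψ).mpr ?_)
    rintro _ ⟨v, hv, rfl⟩
    exact (Submodule.mem_dualAnnihilator _).mp (hM hφ) v hv
  have hfinrank := (Submodule.finrank_mono hD).trans (Submodule.finrank_map_le _ _)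
  have hsum := Subspace.finrank_add_finrank_dualAnnihilator_eq (M.map π)
  omega

lemma exists_finrank_le_of_homogeneousComponent_mem {K τ V : Type*} [Field K] [AddCommGroup V]
    [Module K V] [FiniteDimensional K V] (π : MvPolynomial τ K →ₗ[K] V)
    {N : Submodule K (MvPolynomial τ K)} (hN : ∀ P ∈ N, ∀ m, homogeneousComponent m P ∈ N) :
    ∃ U : Submodule K (MvPolynomial τ K), (∀ P ∈ U, ∀ m, homogeneousComponent m P ∈ U) ∧
      FiniteDimensional K U ∧ Module.finrank K U ≤ Module.finrank K (N.map π) ∧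
      N ≤ U ⊔ LinearMap.ker π := by
  let S : Set (MvPolynomial τ K) := {P | P ∈ N ∧ ∃ m, P.IsHomogeneous m}
  have hspan : Submodule.span K S = N := by
    refine le_antisymm (Submodule.span_le.mpr fun P hP => hP.1) fun P hP => ?_
    rw [← sum_homogeneousComponent P]
    exact sum_mem fun m _ =>
      Submodule.subset_span ⟨hN P hP m, m, homogeneousComponent_isHomogeneous m P⟩
  obtain ⟨v, hvS, hv, -⟩ := Submodule.exists_fun_fin_finrank_span_eq K (π '' S)
  choose g hgS hg using hvS
  have hmap : (Submodule.span K (Set.range g)).map π = N.map π := by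
    rw [← hspan, Submodule.map_span, Submodule.map_span, ← Set.range_comp, Function.comp_def]
    simp only [hg, hv]
  refine ⟨Submodule.span K (Set.range g), fun P hP m => ?_,
    FiniteDimensional.span_of_finite K (Set.finite_range g), ?_, ?_⟩
  · induction hP using Submodule.span_induction with
    | mem P hP =>
      obtain ⟨i, rfl⟩ := hP
      obtain ⟨d, hd⟩ := (hgS i).2
      rw [homogeneousComponent_of_mem hd]
      split_ifs
      · exact Submodule.subset_span ⟨i, rfl⟩
      · exact zero_mem _
    | zero => rw [map_zero]; exact zero_mem _
    | add P Q _ _ hP hQ => rw [map_add]; exact add_mem hP hQ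
    | smul c P _ hP => rw [map_smul]; exact Submodule.smul_mem _ c hP
  · refine (finrank_range_le_card g).trans ?_
    rw [Fintype.card_fin, ← Submodule.map_span, hspan]
  · rw [← Submodule.comap_map_eq, hmap]
    exact Submodule.le_comap_map π N

variable {n : ℕ}

lemma bAct_bAct (ε ε' : Fin n → ℤˣ) (σ σ' : Equiv.Perm (Fin n))
    (P : MvPolynomial (Fin n ⊕ Fin n) ℂ) :
    bAct n ε' σ' (bAct n ε σ P) = bAct n (ε * (ε' ∘ σ)) (σ' * σ) P := by
  rw [← AlgHom.comp_apply]
  congr 1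
  ext (i | i) : 1 <;> simp [bAct, smul_smul]

variable (n) in
/-- The complement of `signIsotypic n p` spanned by the differences that `W(Bₙ)`-equivariant maps
to the `p`-th power of the sign character kill. -/
noncomputable def signCoinvariantKernel (p : ℕ) : Submodule ℂ (MvPolynomial (Fin n ⊕ Fin n) ℂ) :=
  Submodule.span ℂ (Set.range fun w : (Fin n → ℤˣ) × Equiv.Perm (Fin n) ×
    MvPolynomial (Fin n ⊕ Fin n) ℂ =>
      bAct n w.1 w.2.1 w.2.2 - (∏ i, ((w.1 i : ℤ) : ℂ)) ^ p • w.2.2)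

lemma bAct_sub_smul_mem_signCoinvariantKernel (p : ℕ) (ε : Fin n → ℤˣ) (σ : Equiv.Perm (Fin n))
    (P : MvPolynomial (Fin n ⊕ Fin n) ℂ) :
    bAct n ε σ P - (∏ i, ((ε i : ℤ) : ℂ)) ^ p • P ∈ signCoinvariantKernel n p :=
  Submodule.subset_span ⟨(ε, σ, P), rfl⟩

lemma homogeneousComponent_mem_signCoinvariantKernel {p : ℕ}
    {P : MvPolynomial (Fin n ⊕ Fin n) ℂ} (hP : P ∈ signCoinvariantKernel n p) (m : ℕ) :
    homogeneousComponent m P ∈ signCoinvariantKernel n p := by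
  have hle : signCoinvariantKernel n p ≤
      (signCoinvariantKernel n p).comap (homogeneousComponent m) := by
    refine Submodule.span_le.mpr ?_
    rintro _ ⟨⟨ε, σ, Q⟩, rfl⟩
    rw [SetLike.mem_coe, Submodule.mem_comap, map_sub, map_smul, homogeneousComponent_bAct]
    exact bAct_sub_smul_mem_signCoinvariantKernel p ε σ _
  exact hle hP

lemma prod_units_mul_self (ε : Fin n → ℤˣ) :
    (∏ i, ((ε i : ℤ) : ℂ)) * ∏ i, ((ε i : ℤ) : ℂ) = 1 := by
  rw [← Finset.prod_mul_distrib]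
  refine Finset.prod_eq_one fun i _ => ?_
  rw [← Int.cast_mul, ← Units.val_mul, Int.units_mul_self, Units.val_one, Int.cast_one]

lemma sum_smul_bAct_mem_signIsotypic (p : ℕ) (P : MvPolynomial (Fin n ⊕ Fin n) ℂ) :
    ∑ σ, ∑ ε : Fin n → ℤˣ, (∏ i, ((ε i : ℤ) : ℂ)) ^ p • bAct n ε σ P ∈ signIsotypic n p := by
  intro ε' σ'
  simp only [map_sum, map_smul, bAct_bAct, Finset.smul_sum, smul_smul, ← mul_pow]
  refine Fintype.sum_equiv (Equiv.mulLeft σ') _ _ fun σ =>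
    Fintype.sum_equiv (Equiv.mulRight (ε' ∘ σ)) _ _ fun ε => ?_
  have hprod : ∏ i, (((ε * (ε' ∘ σ)) i : ℤ) : ℂ) =
      (∏ i, ((ε i : ℤ) : ℂ)) * ∏ i, ((ε' i : ℤ) : ℂ) := by
    rw [← Equiv.prod_comp σ fun i => ((ε' i : ℤ) : ℂ), ← Finset.prod_mul_distrib]
    simp
  rw [Equiv.coe_mulLeft, Equiv.coe_mulRight, hprod, mul_left_comm, prod_units_mul_self, mul_one]

lemma signIsotypic_sup_signCoinvariantKernel (p : ℕ) :
    signIsotypic n p ⊔ signCoinvariantKernel n p = ⊤ := by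
  refine eq_top_iff.mpr fun P _ => ?_
  let c : ℂ := Fintype.card (Equiv.Perm (Fin n)) * Fintype.card (Fin n → ℤˣ)
  have hc : c ≠ 0 := mul_ne_zero (Nat.cast_ne_zero.mpr Fintype.card_ne_zero)
    (Nat.cast_ne_zero.mpr Fintype.card_ne_zero)
  have hsum : (∑ σ, ∑ ε : Fin n → ℤˣ, (∏ i, ((ε i : ℤ) : ℂ)) ^ p • bAct n ε σ P) -
      ∑ σ, ∑ ε : Fin n → ℤˣ, (∏ i, ((ε i : ℤ) : ℂ)) ^ p •
        (bAct n ε σ P - (∏ i, ((ε i : ℤ) : ℂ)) ^ p • P) = c • P := by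
    simp only [← Finset.sum_sub_distrib, ← smul_sub, sub_sub_cancel, smul_smul, ← mul_pow,
      prod_units_mul_self, one_pow, one_smul, Finset.sum_const, Finset.card_univ]
    rw [← Nat.cast_smul_eq_nsmul ℂ, Nat.cast_mul]
  refine (Submodule.smul_mem_iff _ hc).mp (hsum ▸ sub_mem ?_ ?_)
  · exact Submodule.mem_sup_left (sum_smul_bAct_mem_signIsotypic p P)
  · exact Submodule.mem_sup_right (sum_mem fun σ _ => sum_mem fun ε _ =>
      Submodule.smul_mem _ _ (bAct_sub_smul_mem_signCoinvariantKernel p ε σ P))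

lemma pow_le_choose_add_finrank_map_signCoinvariantKernel {p : ℕ} (hp : p ≤ 1) :
    (2 * n + 1) ^ n ≤ (n + p).choose n + Module.finrank ℂ
      ((signCoinvariantKernel n p).map (Ideal.Quotient.mkₐ ℂ (diagIdeal n)).toLinearMap) := by
  obtain ⟨U, hU, _, hfinrank, hle⟩ := exists_finrank_le_of_homogeneousComponent_mem
    (Ideal.Quotient.mkₐ ℂ (diagIdeal n)).toLinearMap
    fun _ hP => homogeneousComponent_mem_signCoinvariantKernel (n := n) (p := p) hP
  have hker : LinearMap.ker (Ideal.Quotient.mkₐ ℂ (diagIdeal n)).toLinearMap ≤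
      (degreeDropIdeal ℂ n).restrictScalars ℂ := fun P hP =>
    diagIdeal_le_degreeDropIdeal n ((Ideal.Quotient.eq_zero_iff_mem (I := diagIdeal n)).mp hP)
  have htop : (signIsotypic n p ⊔ U).map (orbitMap ℂ n) = ⊤ := by
    refine map_orbitMap_eq_top (fun P hP m => ?_) (eq_top_iff.mpr ?_)
    · obtain ⟨Q, hQ, R, hR, rfl⟩ := Submodule.mem_sup.mp hP
      rw [map_add]
      exact Submodule.add_mem_sup (homogeneousComponent_mem_signIsotypic hQ m) (hU R hR m)
    · rw [← signIsotypic_sup_signCoinvariantKernel p, sup_assoc]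
      exact sup_le_sup_left (hle.trans (sup_le_sup_left hker U)) _
  calc (2 * n + 1) ^ n
      = Module.finrank ℂ ((signIsotypic n p ⊔ U).map (orbitMap ℂ n)) := by
        rw [htop, finrank_top, Module.finrank_fintype_fun_eq_card, Fintype.card_fun,
          Fintype.card_fin, Fintype.card_fin]
    _ ≤ Module.finrank ℂ ((signIsotypic n p).map (orbitMap ℂ n)) +
          Module.finrank ℂ (U.map (orbitMap ℂ n)) := by
        rw [Submodule.map_sup]
        exact Submodule.finrank_add_le_finrank_add_finrank _ _
    _ ≤ _ := add_le_add (finrank_map_orbitMap_signIsotypic_le hp)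
        ((Submodule.finrank_map_le _ _).trans hfinrank)

variable (K : Type*) [CommRing K]

/-- The polynomials in the variables `Z_{(a,b)}` with `a + b` odd that are killed by the lowering
derivations of even degree. The polarizations of its elements are the functionals of sign type on
the diagonal coinvariants. -/
def oddInvariants : Subalgebra K (MvPolynomial (ℕ × ℕ) K) where
  carrier := {f | f ∈ supported K {k : ℕ × ℕ | Odd (k.1 + k.2)} ∧
    ∀ q ≠ 0, Even (q.1 + q.2) → loweringDerivation K q f = 0}
  mul_mem' {f g} hf hg := ⟨mul_mem hf.1 hg.1, fun q hq heven => by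
    rw [Derivation.leibniz, hf.2 q hq heven, hg.2 q hq heven, smul_zero, smul_zero, add_zero]⟩
  add_mem' {f g} hf hg := ⟨add_mem hf.1 hg.1, fun q hq heven => by
    rw [map_add, hf.2 q hq heven, hg.2 q hq heven, add_zero]⟩
  algebraMap_mem' c := ⟨Subalgebra.algebraMap_mem _ c, fun q _ _ =>
    Derivation.map_algebraMap _ c⟩

theorem pow_add_card_le_finrank_quotient_diagIdeal {ι : Type*} [Fintype ι]
    {f : ι → MvPolynomial (ℕ × ℕ) ℂ} (hlin : LinearIndependent ℂ f)
    (hf : ∀ i, f i ∈ oddInvariants ℂ) (hhom : ∀ i, (f i).IsHomogeneous n) :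
    (2 * n + 1) ^ n + Fintype.card ι ≤
      Module.finrank ℂ (MvPolynomial (Fin n ⊕ Fin n) ℂ ⧸ diagIdeal n) + (n + 1) := by
  have hspan : Submodule.span ℂ (Set.range f) ≤ homogeneousSubmodule (ℕ × ℕ) ℂ n :=
    Submodule.span_le.mpr (Set.range_subset_iff.mpr hhom)
  have hpol : LinearIndependent ℂ fun i => polarization ℂ n (f i) :=
    hlin.map_injOn _ (LinearMap.injOn_of_disjoint_ker le_rfl <| Submodule.disjoint_def.mpr
      fun g hg hg0 => eq_zero_of_polarization_eq_zero (hspan hg) hg0)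
  have hker : Submodule.span ℂ (Set.range fun i => polarization ℂ n (f i)) ≤
      (LinearMap.ker (Ideal.Quotient.mkₐ ℂ (diagIdeal n)).toLinearMap).dualAnnihilator := by
    refine Submodule.span_le.mpr (Set.range_subset_iff.mpr fun i => ?_)
    refine (Submodule.mem_dualAnnihilator _).mpr fun P hP => ?_
    exact polarization_eq_zero_of_mem_diagIdeal (hf i).2
      ((Ideal.Quotient.eq_zero_iff_mem (I := diagIdeal n)).mp hP)
  have hsign : Submodule.span ℂ (Set.range fun i => polarization ℂ n (f i)) ≤
      (signCoinvariantKernel n 1).dualAnnihilator := by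
    refine Submodule.span_le.mpr (Set.range_subset_iff.mpr fun i => ?_)
    rw [SetLike.mem_coe, signCoinvariantKernel, Submodule.mem_dualAnnihilator]
    refine fun P hP => Submodule.span_le (p := LinearMap.ker (polarization ℂ n (f i))).mpr ?_ hP
    rintro _ ⟨⟨ε, σ, Q⟩, rfl⟩
    simp only [SetLike.mem_coe, LinearMap.mem_ker, map_sub, map_smul, pow_one, smul_eq_mul,
      polarization_bAct (hf i).1, sub_self]
  have hdim := finrank_add_finrank_map_le_of_le_dualAnnihilator hker hsign
  have hbound := pow_le_choose_add_finrank_map_signCoinvariantKernel (n := n) le_rfl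
  rw [finrank_span_eq_card hpol] at hdim
  rw [Nat.choose_succ_self_right] at hbound
  omega

end SignIsotypicComplement

section OddInvariantFamily

/-- The binary form of degree `d` in `u` and `v` with coefficients `c`. -/
def binaryForm {R : Type*} [CommSemiring R] (c : ℕ × ℕ → R) (d : ℕ) (u v : R) : R :=
  ∑ p ∈ Finset.HasAntidiagonal.antidiagonal d, c p * u ^ p.1 * v ^ p.2

lemma isHomogeneous_binaryForm {τ R : Type*} [CommSemiring R] {c : ℕ × ℕ → MvPolynomial τ R}
    {u v : MvPolynomial τ R} (hc : ∀ p, (c p).IsHomogeneous 1) (hu : u.IsHomogeneous 1)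
    (hv : v.IsHomogeneous 1) (d : ℕ) : (binaryForm c d u v).IsHomogeneous (d + 1) := by
  refine IsHomogeneous.sum _ _ _ fun p hp => ?_
  have hdegree : 1 + 1 * p.1 + 1 * p.2 = d + 1 := by
    rw [← Finset.HasAntidiagonal.mem_antidiagonal.mp hp]
    ring
  exact hdegree ▸ ((hc p).mul (hu.pow _)).mul (hv.pow _)

variable {K : Type*} [CommRing K]

lemma loweringDerivation_X_eq_zero {q k : ℕ × ℕ} (h : k.1 + k.2 < q.1 + q.2) :
    loweringDerivation K q (X k) = 0 := by
  rw [loweringDerivation_X, if_neg fun hqk => ?_]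
  have := hqk.1
  have := hqk.2
  omega

lemma loweringDerivation_neg_X_eq_zero {q k : ℕ × ℕ} (h : k.1 + k.2 < q.1 + q.2) :
    loweringDerivation K q (-X k) = 0 := by
  rw [map_neg, loweringDerivation_X_eq_zero h, neg_zero]

lemma loweringDerivation_binaryForm {q : ℕ × ℕ} {u v : MvPolynomial (ℕ × ℕ) K}
    (hu : loweringDerivation K q u = 0) (hv : loweringDerivation K q v = 0)
    (c : ℕ × ℕ → MvPolynomial (ℕ × ℕ) K) (d : ℕ) :
    loweringDerivation K q (binaryForm c d u v) =
      binaryForm (loweringDerivation K q ∘ c) d u v := by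
  simp only [binaryForm, map_sum, Derivation.leibniz, Derivation.leibniz_pow, hu, hv, smul_eq_mul,
    Function.comp_apply]
  exact Finset.sum_congr rfl fun p _ => by ring

lemma loweringDerivation_binaryForm_eq_zero {q : ℕ × ℕ} {u v : MvPolynomial (ℕ × ℕ) K}
    (hu : loweringDerivation K q u = 0) (hv : loweringDerivation K q v = 0)
    {c : ℕ × ℕ → MvPolynomial (ℕ × ℕ) K} {d : ℕ}
    (hc : ∀ p : ℕ × ℕ, p.1 + p.2 = d → loweringDerivation K q (c p) = 0) :
    loweringDerivation K q (binaryForm c d u v) = 0 := by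
  rw [loweringDerivation_binaryForm hu hv]
  refine Finset.sum_eq_zero fun p hp => ?_
  rw [Function.comp_apply, hc p (Finset.HasAntidiagonal.mem_antidiagonal.mp hp), zero_mul,
    zero_mul]

variable (K) in
/-- The generic binary form of degree `d` evaluated at the zero `(Z_{(0,1)}, -Z_{(1,0)})` of the
generic linear form. -/
noncomputable def formAtRoot (d : ℕ) : MvPolynomial (ℕ × ℕ) K :=
  binaryForm X d (X (0, 1)) (-X (1, 0))

variable (K) in
lemma formAtRoot_one : formAtRoot K 1 = 0 := by
  simp only [formAtRoot, binaryForm, Finset.Nat.antidiagonal_succ, Finset.Nat.antidiagonal_zero,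
    Finset.map_singleton, Finset.cons_eq_insert]
  simp
  ring

variable (K) in
lemma isHomogeneous_formAtRoot (d : ℕ) : (formAtRoot K d).IsHomogeneous (d + 1) :=
  isHomogeneous_binaryForm (isHomogeneous_X K) (isHomogeneous_X K _) (isHomogeneous_X K _).neg d

lemma loweringDerivation_formAtRoot_of_lt {q : ℕ × ℕ} {d : ℕ} (hd : d < q.1 + q.2)
    (hq : 2 ≤ q.1 + q.2) : loweringDerivation K q (formAtRoot K d) = 0 :=
  loweringDerivation_binaryForm_eq_zero (loweringDerivation_X_eq_zero (by grind))
    (loweringDerivation_neg_X_eq_zero (by grind))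
    fun p hp => loweringDerivation_X_eq_zero (hp ▸ hd)

lemma loweringDerivation_formAtRoot {q : ℕ × ℕ} (hq : 2 ≤ q.1 + q.2) (d : ℕ) :
    loweringDerivation K q (formAtRoot K (d + (q.1 + q.2))) =
      X (0, 1) ^ q.1 * (-X (1, 0)) ^ q.2 * formAtRoot K d := by
  rw [formAtRoot, loweringDerivation_binaryForm (loweringDerivation_X_eq_zero (by grind))
    (loweringDerivation_neg_X_eq_zero (by grind))]
  simp only [formAtRoot, binaryForm, Function.comp_apply, loweringDerivation_X, ite_mul, zero_mul,
    ← Finset.sum_filter, Finset.mul_sum]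
  refine Finset.sum_nbij' (fun p => p - q) (fun p => p + q) (fun p hp => ?_) (fun p hp => ?_)
    (fun p hp => ?_) (fun p _ => add_tsub_cancel_right p q) fun p hp => ?_
  all_goals simp only [Finset.mem_filter, Finset.HasAntidiagonal.mem_antidiagonal] at hp ⊢
  · have hfst := hp.2.1
    have hsnd := hp.2.2
    simp only [Prod.fst_sub, Prod.snd_sub]
    omega
  · exact ⟨by simp only [Prod.fst_add, Prod.snd_add]; omega, le_add_self⟩
  · exact tsub_add_cancel_of_le hp.2
  · obtain ⟨r, rfl⟩ := exists_add_of_le hp.2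
    simp only [add_tsub_cancel_left, Prod.fst_add, Prod.snd_add, pow_add]
    ring

lemma binaryForm_mem {R : Type*} [CommSemiring R] [Algebra K R] {S : Subalgebra K R}
    {c : ℕ × ℕ → R} {d : ℕ} {u v : R} (hc : ∀ p : ℕ × ℕ, p.1 + p.2 = d → c p ∈ S) (hu : u ∈ S)
    (hv : v ∈ S) : binaryForm c d u v ∈ S :=
  sum_mem fun p hp => mul_mem
    (mul_mem (hc p (Finset.HasAntidiagonal.mem_antidiagonal.mp hp)) (pow_mem hu _)) (pow_mem hv _)

lemma X_mem_supported_odd {k : ℕ × ℕ} (hk : Odd (k.1 + k.2)) :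
    X k ∈ supported K {k : ℕ × ℕ | Odd (k.1 + k.2)} :=
  Algebra.subset_adjoin (Set.mem_image_of_mem _ hk)

lemma formAtRoot_mem_supported {d : ℕ} (hd : Odd d) :
    formAtRoot K d ∈ supported K {k : ℕ × ℕ | Odd (k.1 + k.2)} :=
  binaryForm_mem (fun _ hp => X_mem_supported_odd (hp ▸ hd)) (X_mem_supported_odd (by decide))
    (neg_mem (X_mem_supported_odd (by decide)))

lemma two_le_fst_add_snd_of_even {q : ℕ × ℕ} (hq : q ≠ 0) (heven : Even (q.1 + q.2)) :
    2 ≤ q.1 + q.2 := by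
  obtain ⟨a, b⟩ := q
  rw [Ne, Prod.mk_eq_zero] at hq
  rw [Nat.even_iff] at heven
  omega

lemma X_mem_oddInvariants {k : ℕ × ℕ} (hk : k.1 + k.2 = 1) : X k ∈ oddInvariants K :=
  ⟨X_mem_supported_odd (hk ▸ odd_one), fun _ hq heven =>
    loweringDerivation_X_eq_zero (hk ▸ two_le_fst_add_snd_of_even hq heven)⟩

lemma formAtRoot_three_mem_oddInvariants : formAtRoot K 3 ∈ oddInvariants K := by
  refine ⟨formAtRoot_mem_supported (by decide), fun q hq heven => ?_⟩
  have htwo := two_le_fst_add_snd_of_even hq heven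
  obtain h | h : q.1 + q.2 = 2 ∨ 3 < q.1 + q.2 := by
    rw [Nat.even_iff] at heven
    omega
  · have hlower := loweringDerivation_formAtRoot (K := K) htwo 1
    rwa [h, formAtRoot_one, mul_zero] at hlower
  · exact loweringDerivation_formAtRoot_of_lt h htwo

variable (K) in
/-- For `e = (1, 0)` and `e = (0, 1)`, the derivative of the generic binary cubic form in its
first and second argument, evaluated at the point used in `formAtRoot`. -/
noncomputable def cubicPartialAtRoot (e : ℕ × ℕ) : MvPolynomial (ℕ × ℕ) K :=
  binaryForm (fun p => C ((p.1 * e.1 + p.2 * e.2 + 1 : ℕ) : K) * X (p + e)) 2 (X (0, 1))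
    (-X (1, 0))

variable (K) in
/-- The odd invariant of degree `7` led by `Z_e` times the generic quintic form at the root of the
generic linear form. The lowering derivations of degree `2` map `cubicPartialAtRoot K e` to
`Z_e` times what they divide out of the quintic form, so the second term restores invariance. -/
noncomputable def septicInvariant (e : ℕ × ℕ) : MvPolynomial (ℕ × ℕ) K :=
  X e * formAtRoot K 5 - formAtRoot K 3 * cubicPartialAtRoot K e

lemma isHomogeneous_septicInvariant (e : ℕ × ℕ) : (septicInvariant K e).IsHomogeneous 7 :=
  .sub ((isHomogeneous_X K e).mul (isHomogeneous_formAtRoot K 5))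
    ((isHomogeneous_formAtRoot K 3).mul <| isHomogeneous_binaryForm
      (fun _ => (isHomogeneous_X K _).C_mul _) (isHomogeneous_X K _) (isHomogeneous_X K _).neg 2)

lemma loweringDerivation_cubicPartialAtRoot {e q : ℕ × ℕ} (he : e = (1, 0) ∨ e = (0, 1))
    (hq : q.1 + q.2 = 2) : loweringDerivation K q (cubicPartialAtRoot K e) =
      X e * (X (0, 1) ^ q.1 * (-X (1, 0)) ^ q.2) := by
  rw [cubicPartialAtRoot, loweringDerivation_binaryForm
    (loweringDerivation_X_eq_zero (by simp [hq]))
    (loweringDerivation_neg_X_eq_zero (by simp [hq]))]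
  obtain ⟨a, b⟩ := q
  obtain ⟨rfl, rfl⟩ | ⟨rfl, rfl⟩ | ⟨rfl, rfl⟩ : (a = 2 ∧ b = 0) ∨ (a = 1 ∧ b = 1) ∨
    (a = 0 ∧ b = 2) := by simp only at hq; omega
  all_goals
    obtain rfl | rfl := he <;>
    simp [binaryForm, Finset.Nat.antidiagonal_succ, loweringDerivation_X, Derivation.leibniz] <;>
    ring

lemma loweringDerivation_cubicPartialAtRoot_of_lt {e q : ℕ × ℕ} (he : e = (1, 0) ∨ e = (0, 1))
    (hq : 3 < q.1 + q.2) : loweringDerivation K q (cubicPartialAtRoot K e) = 0 := by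
  refine loweringDerivation_binaryForm_eq_zero (loweringDerivation_X_eq_zero (by grind))
    (loweringDerivation_neg_X_eq_zero (by grind)) fun p hp => ?_
  rw [← smul_eq_C_mul, Derivation.map_smul, loweringDerivation_X_eq_zero, smul_zero]
  obtain rfl | rfl := he <;> simp only [Prod.fst_add, Prod.snd_add] <;> omega

lemma septicInvariant_mem_supported {e : ℕ × ℕ} (he : e = (1, 0) ∨ e = (0, 1)) :
    septicInvariant K e ∈ supported K {k : ℕ × ℕ | Odd (k.1 + k.2)} := by
  have hX : X e ∈ supported K {k : ℕ × ℕ | Odd (k.1 + k.2)} :=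
    X_mem_supported_odd (by obtain rfl | rfl := he <;> decide)
  refine sub_mem (mul_mem hX (formAtRoot_mem_supported (by decide)))
    (mul_mem (formAtRoot_mem_supported (by decide)) (binaryForm_mem (fun p hp => ?_)
      (X_mem_supported_odd (by decide)) (neg_mem (X_mem_supported_odd (by decide)))))
  refine mul_mem (Subalgebra.algebraMap_mem _ _) (X_mem_supported_odd ⟨1, ?_⟩)
  obtain rfl | rfl := he <;> simp only [Prod.fst_add, Prod.snd_add] <;> omega

lemma septicInvariant_mem_oddInvariants {e : ℕ × ℕ} (he : e = (1, 0) ∨ e = (0, 1)) :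
    septicInvariant K e ∈ oddInvariants K := by
  refine ⟨septicInvariant_mem_supported he, fun q hq heven => ?_⟩
  have htwo := two_le_fst_add_snd_of_even hq heven
  have hX : loweringDerivation K q (X e) = 0 :=
    loweringDerivation_X_eq_zero (by obtain rfl | rfl := he <;> exact htwo)
  rw [septicInvariant, map_sub, Derivation.leibniz, Derivation.leibniz, hX,
    formAtRoot_three_mem_oddInvariants.2 q hq heven, smul_zero, add_zero, smul_zero, add_zero,
    smul_eq_mul, smul_eq_mul]
  obtain h | h | h : q.1 + q.2 = 2 ∨ q.1 + q.2 = 4 ∨ 5 < q.1 + q.2 := by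
    rw [Nat.even_iff] at heven
    omega
  · have hlower := loweringDerivation_formAtRoot (K := K) htwo 3
    rw [h] at hlower
    rw [hlower, loweringDerivation_cubicPartialAtRoot he h]
    ring
  · have hlower := loweringDerivation_formAtRoot (K := K) htwo 1
    rw [h, formAtRoot_one, mul_zero] at hlower
    rw [hlower, loweringDerivation_cubicPartialAtRoot_of_lt he (by omega), mul_zero, mul_zero,
      sub_zero]
  · rw [loweringDerivation_formAtRoot_of_lt h htwo,
      loweringDerivation_cubicPartialAtRoot_of_lt he (by omega), mul_zero, mul_zero, sub_zero]

/-- Labels of `oddInvariantFamily n`: the exponents `c` of the quartic and `a` of `Z_{(1,0)}` in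
the three kinds of members. -/
abbrev OddFamilyIndex (n : ℕ) :=
  (Σ c : Fin (n / 4 + 1), Fin (n + 1 - 4 * c)) ⊕
    (Σ c : Fin ((n - 3) / 4), Fin (n - 6 - 4 * c)) ⊕ Fin ((n - 3) / 4)

variable (K) in
/-- Products of degree `n` of the odd invariants `Z_{(1,0)}`, `Z_{(0,1)}`, `formAtRoot K 3` (of
degree `4`) and at most one septic invariant. -/
noncomputable def oddInvariantFamily (n : ℕ) : OddFamilyIndex n → MvPolynomial (ℕ × ℕ) K
  | .inl ⟨c, a⟩ => X (1, 0) ^ (a : ℕ) * X (0, 1) ^ (n - 4 * c - a) * formAtRoot K 3 ^ (c : ℕ)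
  | .inr (.inl ⟨c, a⟩) => X (1, 0) ^ (a : ℕ) * X (0, 1) ^ (n - 7 - 4 * c - a) *
      formAtRoot K 3 ^ (c : ℕ) * septicInvariant K (0, 1)
  | .inr (.inr c) => X (1, 0) ^ (n - 7 - 4 * c) * formAtRoot K 3 ^ (c : ℕ) *
      septicInvariant K (1, 0)

lemma oddInvariantFamily_mem_oddInvariants {n : ℕ} (i : OddFamilyIndex n) :
    oddInvariantFamily K n i ∈ oddInvariants K := by
  have hx : X (1, 0) ∈ oddInvariants K := X_mem_oddInvariants rfl
  have hy : X (0, 1) ∈ oddInvariants K := X_mem_oddInvariants rfl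
  have hquartic := formAtRoot_three_mem_oddInvariants (K := K)
  rcases i with ⟨c, a⟩ | ⟨c, a⟩ | c
  · exact mul_mem (mul_mem (pow_mem hx _) (pow_mem hy _)) (pow_mem hquartic _)
  · exact mul_mem (mul_mem (mul_mem (pow_mem hx _) (pow_mem hy _)) (pow_mem hquartic _))
      (septicInvariant_mem_oddInvariants (.inr rfl))
  · exact mul_mem (mul_mem (pow_mem hx _) (pow_mem hquartic _))
      (septicInvariant_mem_oddInvariants (.inl rfl))

lemma isHomogeneous_oddInvariantFamily {n : ℕ} (i : OddFamilyIndex n) :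
    (oddInvariantFamily K n i).IsHomogeneous n := by
  have hx (a : ℕ) : (X (1, 0) ^ a : MvPolynomial (ℕ × ℕ) K).IsHomogeneous a :=
    isHomogeneous_X_pow _ _
  have hy (b : ℕ) : (X (0, 1) ^ b : MvPolynomial (ℕ × ℕ) K).IsHomogeneous b :=
    isHomogeneous_X_pow _ _
  have hquartic (c : ℕ) := (isHomogeneous_formAtRoot K 3).pow c
  have hseptic (e : ℕ × ℕ) := isHomogeneous_septicInvariant (K := K) e
  rcases i with ⟨c, a⟩ | ⟨c, a⟩ | c
  · have hmul := ((hx a).mul (hy (n - 4 * c - a))).mul (hquartic c)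
    rwa [show a + (n - 4 * c - a) + (3 + 1) * c = n by omega] at hmul
  · have hmul := (((hx a).mul (hy (n - 7 - 4 * c - a))).mul (hquartic c)).mul (hseptic (0, 1))
    rwa [show a + (n - 7 - 4 * c - a) + (3 + 1) * c + 7 = n by omega] at hmul
  · have hmul := ((hx (n - 7 - 4 * c)).mul (hquartic c)).mul (hseptic (1, 0))
    rwa [show n - 7 - 4 * c + (3 + 1) * c + 7 = n by omega] at hmul

variable (K) in
/-- The specialization setting `Z_{(0,1)} = 1` and keeping only `Z_{(1,0)}`, `Z_{(3,0)}` and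
`Z_{(5,0)}`, under which the quartic and the septic invariants have few terms. -/
noncomputable def sparseSpecialization : MvPolynomial (ℕ × ℕ) K →ₐ[K] MvPolynomial (Fin 3) K :=
  aeval fun k => if k = (1, 0) then X 0 else if k = (0, 1) then 1 else
    if k = (3, 0) then X 1 else if k = (5, 0) then X 2 else 0

lemma sparseSpecialization_X (k : ℕ × ℕ) : sparseSpecialization K (X k) =
    if k = (1, 0) then X 0 else if k = (0, 1) then 1 else
      if k = (3, 0) then X 1 else if k = (5, 0) then X 2 else 0 :=
  aeval_X ..

lemma sparseSpecialization_formAtRoot_three :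
    sparseSpecialization K (formAtRoot K 3) = X 1 := by
  simp [formAtRoot, binaryForm, Finset.Nat.antidiagonal_succ, sparseSpecialization_X]

lemma sparseSpecialization_formAtRoot_five :
    sparseSpecialization K (formAtRoot K 5) = X 2 := by
  simp [formAtRoot, binaryForm, Finset.Nat.antidiagonal_succ, sparseSpecialization_X]

lemma sparseSpecialization_septicInvariant_zero_one :
    sparseSpecialization K (septicInvariant K (0, 1)) = X 2 := by
  simp [septicInvariant, cubicPartialAtRoot, sparseSpecialization_formAtRoot_three,
    sparseSpecialization_formAtRoot_five, binaryForm, Finset.Nat.antidiagonal_succ,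
    sparseSpecialization_X]

lemma sparseSpecialization_septicInvariant_one_zero :
    sparseSpecialization K (septicInvariant K (1, 0)) = X 0 * X 2 - 3 * X 1 ^ 2 := by
  have htwo : sparseSpecialization K 2 = 2 := map_ofNat _ 2
  simp [htwo, septicInvariant, cubicPartialAtRoot, sparseSpecialization_formAtRoot_three,
    sparseSpecialization_formAtRoot_five, binaryForm, Finset.Nat.antidiagonal_succ,
    sparseSpecialization_X]
  ring

/-- The exponent of `X 0 ^ a * X 1 ^ b * X 2 ^ c`. -/
noncomputable def exponent₃ (a b c : ℕ) : Fin 3 →₀ ℕ := Finsupp.equivFunOnFinite.symm ![a, b, c]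

lemma exponent₃_inj {a b c a' b' c' : ℕ} :
    exponent₃ a b c = exponent₃ a' b' c' ↔ a = a' ∧ b = b' ∧ c = c' := by
  simp [exponent₃]

lemma monomial_exponent₃ (a b c : ℕ) :
    monomial (exponent₃ a b c) (1 : K) = X 0 ^ a * X 1 ^ b * X 2 ^ c := by
  rw [monomial_eq, Finsupp.prod_fintype _ _ fun _ => pow_zero _, Fin.prod_univ_three, C_1, one_mul]
  rfl

/-- The exponent of the monomial by which the specialization of `oddInvariantFamily K n i` is told
apart from the other ones. -/
noncomputable def leadingExponent {n : ℕ} : OddFamilyIndex n → Fin 3 →₀ ℕ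
  | .inl ⟨c, a⟩ => exponent₃ a c 0
  | .inr (.inl ⟨c, a⟩) => exponent₃ a c 1
  | .inr (.inr c) => exponent₃ (n - 6 - 4 * c) c 1

lemma leadingExponent_injective (n : ℕ) :
    Function.Injective (leadingExponent (n := n)) := by
  rintro (⟨c, a⟩ | ⟨c, a⟩ | c) (⟨c', a'⟩ | ⟨c', a'⟩ | c') h
  all_goals
    simp only [leadingExponent, exponent₃_inj] at h
    obtain ⟨ha, hc, h⟩ := h
    first
    | omega
    | obtain rfl := Fin.ext hc
      first
      | rfl
      | obtain rfl := Fin.ext ha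
        rfl

lemma exists_sparseSpecialization_oddInvariantFamily_eq {n : ℕ} (i : OddFamilyIndex n) :
    ∃ r : MvPolynomial (Fin 3) K, (∀ j : OddFamilyIndex n, coeff (leadingExponent j) r = 0) ∧
      sparseSpecialization K (oddInvariantFamily K n i) = monomial (leadingExponent i) 1 + r := by
  rcases i with ⟨c, a⟩ | ⟨c, a⟩ | c
  · refine ⟨0, fun j => coeff_zero _, ?_⟩
    simp only [oddInvariantFamily, leadingExponent, monomial_exponent₃, map_mul, map_pow,
      sparseSpecialization_X, sparseSpecialization_formAtRoot_three]
    simp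
  · refine ⟨0, fun j => coeff_zero _, ?_⟩
    simp only [oddInvariantFamily, leadingExponent, monomial_exponent₃, map_mul, map_pow,
      sparseSpecialization_X, sparseSpecialization_formAtRoot_three,
      sparseSpecialization_septicInvariant_zero_one]
    simp
  · refine ⟨-3 • monomial (exponent₃ (n - 7 - 4 * c) (c + 2) 0) 1, fun j => ?_, ?_⟩
    · rw [coeff_smul, coeff_monomial, if_neg, smul_zero]
      rcases j with ⟨c', a'⟩ | ⟨c', a'⟩ | c' <;>
        simp only [leadingExponent, exponent₃_inj] <;> omega
    · have hexp : n - 6 - 4 * (c : ℕ) = n - 7 - 4 * c + 1 := by omega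
      simp only [oddInvariantFamily, leadingExponent, monomial_exponent₃, map_mul, map_pow,
        sparseSpecialization_X, sparseSpecialization_formAtRoot_three,
        sparseSpecialization_septicInvariant_one_zero, hexp]
      simp
      ring

lemma linearIndependent_oddInvariantFamily (n : ℕ) :
    LinearIndependent K (oddInvariantFamily K n) := by
  choose r hr hspec using exists_sparseSpecialization_oddInvariantFamily_eq (K := K) (n := n)
  refine .of_pairwise_dual_eq_zero_one _
    (fun i => lcoeff K (leadingExponent i) ∘ₗ (sparseSpecialization K).toLinearMap)
    (fun i j hij => ?_) fun i => ?_
  · simp [hspec, hr, (leadingExponent_injective n).ne hij.symm]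
  · simp [hspec, hr]

lemma natCast_sum_range_sub_four_mul {N k : ℕ} (h : 4 * k ≤ N + 4) :
    ((∑ c ∈ Finset.range k, (N - 4 * c) : ℕ) : ℤ) = k * N - 2 * k * (k - 1) := by
  induction k with
  | zero => simp
  | succ k ih =>
    rw [Finset.sum_range_succ, Nat.cast_add, ih (by omega), Nat.cast_sub (by omega)]
    push_cast
    ring

lemma add_one_add_le_card_oddFamilyIndex (n : ℕ) :
    (n : ℤ) + 1 + n * (n - 4) / 4 ≤ Fintype.card (OddFamilyIndex n) := by
  have hcard : Fintype.card (OddFamilyIndex n) = ∑ c ∈ Finset.range (n / 4 + 1), (n + 1 - 4 * c) +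
      (∑ c ∈ Finset.range ((n - 3) / 4), (n - 6 - 4 * c) + (n - 3) / 4) := by
    simp only [Fintype.card_sum, Fintype.card_sigma, Fintype.card_fin,
      Fin.sum_univ_eq_sum_range fun c => n + 1 - 4 * c,
      Fin.sum_univ_eq_sum_range fun c => n - 6 - 4 * c]
  rw [hcard, Nat.cast_add, Nat.cast_add, natCast_sum_range_sub_four_mul (by omega),
    natCast_sum_range_sub_four_mul (by omega)]
  have hcast : (((n - 3) / 4 : ℕ) : ℤ) * ((n - 6 : ℕ) : ℤ) = ((n - 3) / 4 : ℕ) * ((n : ℤ) - 6) := by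
    obtain h | h : (n - 3) / 4 = 0 ∨ 6 ≤ n := by omega
    · rw [h, Nat.cast_zero, zero_mul, zero_mul]
    · rw [Nat.cast_sub h, Nat.cast_ofNat]
  rw [hcast, ← le_sub_iff_add_le']
  refine Int.ediv_le_of_le_mul (by norm_num) ?_
  obtain hn | hn := lt_or_ge n 4
  · interval_cases n <;> simp
  obtain ⟨m, r, hr, rfl⟩ : ∃ m r, r < 4 ∧ n = 4 * m + 4 + r :=
    ⟨n / 4 - 1, n % 4, Nat.mod_lt _ (by norm_num), by omega⟩
  have hquot : (4 * m + 4 + r) / 4 = m + 1 := by omega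
  have hquot' : (4 * m + 4 + r - 3) / 4 = m + r / 3 := by omega
  rw [hquot, hquot']
  interval_cases r <;> push_cast <;> linarith

end OddInvariantFamily

theorem dim_diag_coinv_ge_of_four_dvd_general (n : ℕ) :
    (2 * (n : ℤ) + 1) ^ n + (n : ℤ) * ((n : ℤ) - 4) / 4 ≤
      (Module.finrank ℂ (MvPolynomial (Fin n ⊕ Fin n) ℂ ⧸ diagIdeal n) : ℤ) := by
  have hcard := add_one_add_le_card_oddFamilyIndex n
  have hbound := pow_add_card_le_finrank_quotient_diagIdeal (n := n)
    (linearIndependent_oddInvariantFamily n) oddInvariantFamily_mem_oddInvariants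
    isHomogeneous_oddInvariantFamily
  zify at hbound
  linarith

/-- If `n` is a positive integer divisible by 4, then
`dim_ℂ R_W ≥ (2n+1)^n + n(n-4)/4` for the diagonal coinvariant ring of `W(Bₙ)`. -/
theorem dim_diag_coinv_ge_of_four_dvd (n : ℕ) (hn : 0 < n) (h4 : 4 ∣ n) :
    ((2 * n + 1 : ℤ)) ^ n + (n : ℤ) * ((n : ℤ) - 4) / 4 ≤
      (Module.finrank ℂ (MvPolynomial (Fin n ⊕ Fin n) ℂ ⧸ diagIdeal n) : ℤ) :=
  dim_diag_coinv_ge_of_four_dvd_general n
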